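/- arXiv:math/9302207 — 2 statements merged into one kernel-verified Lean document; each statement's English description precedes it below -/
import Mathlib

section
/- Let 1 ≤ q ≤ p ≤ ∞ and let 1 ≤ r ≤ s ≤ q' (where 1/q + 1/q' = 1) satisfy 1/r = 1/p + 1/s. Then for every bounded linear operator T : X → Y between real Banach spaces and every n ∈ ℕ one has the quotient formula π_{p,q}^n(T) = sup{ π_{r,1}^n(T ∘ V ∘ D_σ) : V : ℓ_{q'} → X is a bounded linear operator with ‖V‖ ≤ 1, and σ ∈ ℓ_s with ‖σ‖_s ≤ 1 }, where D_σ : ℓ_∞ → ℓ_{q'} denotes the diagonal operator D_σ(τ) = (σ_k τ_k)_k. -/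
open scoped ENNReal NNReal BigOperators

noncomputable section

/-- The `ℓ_p`-sum `(∑ i, f i ^ p) ^ (1/p)` of a finite family in `ℝ≥0∞`,
with the usual sup-modification for `p = ∞`. -/
def eSum (p : ℝ≥0∞) {ι : Type*} [Fintype ι] (f : ι → ℝ≥0∞) : ℝ≥0∞ :=
  if p = ∞ then ⨆ i, f i else (∑ i, f i ^ p.toReal) ^ (1 / p.toReal)

/-- The weak `ℓ_q`-norm of a finite family of vectors:
`sup { (∑ k |⟨x_k, x*⟩|^q)^(1/q) : x* in the unit ball of the dual }`. -/
def weakLq (q : ℝ≥0∞) {X : Type*} [NormedAddCommGroup X] [NormedSpace ℝ X]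
    {n : ℕ} (x : Fin n → X) : ℝ≥0∞ :=
  ⨆ f : {f : X →L[ℝ] ℝ // ‖f‖ ≤ 1}, eSum q fun k => ENNReal.ofReal |f.1 (x k)|

/-- The `(p,q)`-summing norm of `T` with respect to `n` vectors. -/
def piN (p q : ℝ≥0∞) {X Y : Type*} [NormedAddCommGroup X] [NormedSpace ℝ X]
    [NormedAddCommGroup Y] [NormedSpace ℝ Y] (n : ℕ) (T : X →L[ℝ] Y) : ℝ≥0∞ :=
  ⨆ x : {x : Fin n → X // weakLq q x ≤ 1}, eSum p fun k => ENNReal.ofReal ‖T (x.1 k)‖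

/-- The `(p,q)`-summing norm of `T`. -/
def piPQ (p q : ℝ≥0∞) {X Y : Type*} [NormedAddCommGroup X] [NormedSpace ℝ X]
    [NormedAddCommGroup Y] [NormedSpace ℝ Y] (T : X →L[ℝ] Y) : ℝ≥0∞ :=
  ⨆ n : ℕ, piN p q n T

/-- `T` has rank at most `n`: its range is a finite-dimensional subspace of
dimension at most `n`. -/
def RankLE {X Y : Type*} [NormedAddCommGroup X] [NormedSpace ℝ X]
    [NormedAddCommGroup Y] [NormedSpace ℝ Y] (T : X →L[ℝ] Y) (n : ℕ) : Prop :=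
  FiniteDimensional ℝ (LinearMap.range (T : X →ₗ[ℝ] Y)) ∧
    Module.finrank ℝ (LinearMap.range (T : X →ₗ[ℝ] Y)) ≤ n

/-- The average of `‖∑ k, ε k • x k‖²` over all `2^n` sign choices `ε ∈ {-1,1}^n`. -/
def radAvg {X : Type*} [NormedAddCommGroup X] [NormedSpace ℝ X] {n : ℕ}
    (x : Fin n → X) : ℝ :=
  (∑ ε : Fin n → Bool, ‖∑ k, (if ε k then (1 : ℝ) else -1) • x k‖ ^ 2) / 2 ^ n

/-- The Rademacher cotype `q` constant of `T` with respect to `n` vectors. -/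
def cotypeN (q : ℝ) {X Y : Type*} [NormedAddCommGroup X] [NormedSpace ℝ X]
    [NormedAddCommGroup Y] [NormedSpace ℝ Y] (n : ℕ) (T : X →L[ℝ] Y) : ℝ≥0∞ :=
  ⨆ x : {x : Fin n → X // Real.sqrt (radAvg x) ≤ 1},
    (∑ k, ENNReal.ofReal ‖T (x.1 k)‖ ^ q) ^ (1 / q)

/-- The Rademacher cotype `q` constant of `T`. -/
def cotype (q : ℝ) {X Y : Type*} [NormedAddCommGroup X] [NormedSpace ℝ X]
    [NormedAddCommGroup Y] [NormedSpace ℝ Y] (T : X →L[ℝ] Y) : ℝ≥0∞ :=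
  ⨆ n : ℕ, cotypeN q n T

/-!
The norms `‖V‖` of operators `V : ℓ_{q'} → X` are the suprema of the weak `ℓ_q`-norms of the finite
families `(V e_1, …, V e_N)`. For the lower bound, let `V` map `e_k` to `x_k`; then
`V D_σ e_k = σ_k x_k`, and choosing `σ` extremal in Hölder's inequality for `1/r = 1/p + 1/s` turns
the `ℓ_p`-norm of `(T x_k)_k` into the `ℓ_r`-norm of `(T V D_σ e_k)_k`.

For the upper bound, `s = ∞` forces `q = 1` and `r = p`, where `‖V D_σ‖ ≤ 1` suffices. If `s < ∞`,
approximate `σ` by its truncations. The vectors `x_1, …, x_n ∈ ℓ_∞` have weak `ℓ_1`-norm at most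
one, so their `j`-th coordinates form a point `v_j` of the unit ball of `ℓ_1^n`. The `ℓ_r`-norm of
`(∑ j, σ_j v_{jk} T V e_j)_k` is convex in `(v_j)_j`, so only extreme points matter, and for these
the sums run over disjoint blocks of indices `j`. Dividing the `k`-th block sum by the `ℓ_s`-norm of
`σ` on the `k`-th block leaves a family `y` of weak `ℓ_q`-norm at most one, because `s ≤ q'`;
Hölder's inequality then bounds the `ℓ_r`-norm by the `ℓ_p`-norm of `(T y_k)_k`.
-/

section eSum

variable {ι κ : Type*} [Fintype ι] {p q s r : ℝ≥0∞}

lemma eSum_top (f : ι → ℝ≥0∞) : eSum ∞ f = ⨆ i, f i := if_pos rfl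

lemma eSum_of_ne_top (hp : p ≠ ∞) (f : ι → ℝ≥0∞) :
    eSum p f = (∑ i, f i ^ p.toReal) ^ (1 / p.toReal) := if_neg hp

lemma eSum_one (f : ι → ℝ≥0∞) : eSum 1 f = ∑ i, f i := by
  simp [eSum_of_ne_top]

lemma eSum_rpow_toReal (hp₀ : p ≠ 0) (hp : p ≠ ∞) (f : ι → ℝ≥0∞) :
    eSum p f ^ p.toReal = ∑ i, f i ^ p.toReal := by
  rw [eSum_of_ne_top hp, ← ENNReal.rpow_mul,
    one_div_mul_cancel (ENNReal.toReal_pos hp₀ hp).ne', ENNReal.rpow_one]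

lemma eSum_mono {f g : ι → ℝ≥0∞} (h : ∀ i, f i ≤ g i) : eSum p f ≤ eSum p g := by
  by_cases hp : p = ∞
  · subst hp
    simpa only [eSum_top] using iSup_mono h
  · rw [eSum_of_ne_top hp, eSum_of_ne_top hp]
    gcongr
    exact h _

lemma ne_zero_of_holderTriple (p s : ℝ≥0∞) {r : ℝ≥0∞} [p.HolderTriple s r] (hr₀ : r ≠ 0) :
    p ≠ 0 := by
  rintro rfl
  exact hr₀ (nonpos_iff_eq_zero.1 (ENNReal.HolderTriple.le 0 s r))

lemma eSum_mul_left (hp₀ : p ≠ 0) (c : ℝ≥0∞) (f : ι → ℝ≥0∞) :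
    eSum p (fun i => c * f i) = c * eSum p f := by
  by_cases hp : p = ∞
  · subst hp
    rw [eSum_top, eSum_top, ENNReal.mul_iSup]
  · have hP := ENNReal.toReal_pos hp₀ hp
    rw [eSum_of_ne_top hp, eSum_of_ne_top hp]
    simp_rw [ENNReal.mul_rpow_of_nonneg _ _ hP.le]
    rw [← Finset.mul_sum, ENNReal.mul_rpow_of_nonneg _ _ (by positivity), ← ENNReal.rpow_mul,
      mul_one_div_cancel hP.ne', ENNReal.rpow_one]

lemma eSum_zero (hp₀ : p ≠ 0) : eSum p (fun _ : ι => 0) = 0 := by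
  simpa only [zero_mul] using eSum_mul_left hp₀ 0 fun _ : ι => 0

lemma eSum_single [DecidableEq ι] (hp₀ : p ≠ 0) (i : ι) (a : ℝ≥0∞) :
    eSum p (Pi.single i a) = a := by
  by_cases hp : p = ∞
  · subst hp
    rw [eSum_top]
    refine le_antisymm (iSup_le fun j => ?_) (le_iSup_of_le i (by simp))
    by_cases h : j = i <;> simp [h]
  · have hP := ENNReal.toReal_pos hp₀ hp
    rw [eSum_of_ne_top hp, Finset.sum_eq_single_of_mem i (Finset.mem_univ i)
      fun j _ hj => by simp [hj, hP], Pi.single_eq_same, ← ENNReal.rpow_mul,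
      mul_one_div_cancel hP.ne', ENNReal.rpow_one]

lemma le_eSum (hp₀ : p ≠ 0) (f : ι → ℝ≥0∞) (i : ι) : f i ≤ eSum p f := by
  classical
  calc f i = eSum p (Pi.single i (f i)) := (eSum_single hp₀ i _).symm
    _ ≤ eSum p f := eSum_mono fun j => by by_cases h : j = i <;> simp [h]

lemma enorm_toReal_of_eSum_le_one (hp₀ : p ≠ 0) {f : ι → ℝ≥0∞} (hf : eSum p f ≤ 1) (i : ι) :
    ‖(f i).toReal‖ₑ = f i :=
  Real.enorm_toReal (ne_top_of_le_ne_top ENNReal.one_ne_top ((le_eSum hp₀ f i).trans hf))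

lemma eSum_eq_top_iff (hp₀ : p ≠ 0) {f : ι → ℝ≥0∞} : eSum p f = ∞ ↔ ∃ i, f i = ∞ := by
  refine ⟨fun h => ?_, fun ⟨i, hi⟩ => top_le_iff.1 (hi ▸ le_eSum hp₀ f i)⟩
  by_cases hp : p = ∞
  · subst hp
    by_contra! hf
    have := (Finset.sup_lt_iff (s := Finset.univ) (f := f) ENNReal.zero_lt_top).2
      fun i _ => (hf i).lt_top
    rw [Finset.sup_univ_eq_iSup, ← eSum_top, h] at this
    exact this.false
  · have hP := ENNReal.toReal_pos hp₀ hp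
    rw [eSum_of_ne_top hp, ENNReal.rpow_eq_top_iff_of_pos (by positivity), ENNReal.sum_eq_top] at h
    obtain ⟨i, -, hi⟩ := h
    exact ⟨i, (ENNReal.rpow_eq_top_iff_of_pos hP).1 hi⟩

lemma eSum_add_le (hp : 1 ≤ p) (f g : ι → ℝ≥0∞) :
    eSum p (fun i => f i + g i) ≤ eSum p f + eSum p g := by
  by_cases hp' : p = ∞
  · subst hp'
    simp_rw [eSum_top]
    exact iSup_le fun i => add_le_add (le_iSup f i) (le_iSup g i)
  · simp_rw [eSum_of_ne_top hp']
    exact ENNReal.Lp_add_le _ f g (by simpa using ENNReal.toReal_mono hp' hp)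

lemma eSum_anti (hs₀ : s ≠ 0) (hsq : s ≤ q) (f : ι → ℝ≥0∞) : eSum q f ≤ eSum s f := by
  by_cases hq : q = ∞
  · subst hq
    simpa only [eSum_top] using iSup_le fun i => le_eSum hs₀ f i
  have hs : s ≠ ∞ := ne_top_of_le_ne_top hq hsq
  have hq₀ : q ≠ 0 := (hsq.trans_lt' (pos_iff_ne_zero.2 hs₀)).ne'
  have hSQ : s.toReal ≤ q.toReal := ENNReal.toReal_mono hq hsq
  have split (a : ℝ≥0∞) : a ^ q.toReal = a ^ s.toReal * a ^ (q.toReal - s.toReal) := by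
    rw [← ENNReal.rpow_add_of_nonneg _ _ ENNReal.toReal_nonneg (sub_nonneg.2 hSQ),
      add_sub_cancel]
  rw [← ENNReal.rpow_le_rpow_iff (ENNReal.toReal_pos hq₀ hq)]
  calc eSum q f ^ q.toReal = ∑ i, f i ^ s.toReal * f i ^ (q.toReal - s.toReal) := by
        simp_rw [eSum_rpow_toReal hq₀ hq, split]
    _ ≤ ∑ i, f i ^ s.toReal * eSum s f ^ (q.toReal - s.toReal) := by
        gcongr with i
        exact le_eSum hs₀ f i
    _ = eSum s f ^ q.toReal := by
        rw [← Finset.sum_mul, split (eSum s f), eSum_rpow_toReal hs₀ hs]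

lemma eSum_mul_le [p.HolderTriple s r] (hr₀ : r ≠ 0) (f g : ι → ℝ≥0∞) :
    eSum r (fun i => f i * g i) ≤ eSum p f * eSum s g := by
  have hp₀ : p ≠ 0 := ne_zero_of_holderTriple p s hr₀
  have hs₀ : s ≠ 0 := ne_zero_of_holderTriple s p hr₀
  by_cases hp : p = ∞
  · subst hp
    obtain rfl : r = s := ENNReal.HolderTriple.unique ∞ s r s
    rw [← eSum_mul_left hr₀]
    exact eSum_mono fun i => by gcongr; exact le_eSum hp₀ f i
  by_cases hs : s = ∞
  · subst hs
    obtain rfl : r = p := ENNReal.HolderTriple.unique p ∞ r p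
    simp_rw [mul_comm (eSum r f), ← eSum_mul_left hr₀, mul_comm (f _)]
    exact eSum_mono fun i => by gcongr; exact le_eSum hs₀ g i
  have hr : r ≠ ∞ := ne_top_of_le_ne_top hp (ENNReal.HolderTriple.le p s r)
  have hP := ENNReal.toReal_pos hp₀ hp
  have hS := ENNReal.toReal_pos hs₀ hs
  have hR := ENNReal.toReal_pos hr₀ hr
  have key := ENNReal.inner_le_Lp_mul_Lq Finset.univ (fun i => f i ^ r.toReal)
    (fun i => g i ^ r.toReal) (ENNReal.HolderTriple.toReal r hP hS).holderConjugate_div_div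
  rw [← ENNReal.rpow_le_rpow_iff hR, eSum_rpow_toReal hr₀ hr, ENNReal.mul_rpow_of_nonneg _ _ hR.le,
    eSum_of_ne_top hp, eSum_of_ne_top hs]
  simp_rw [← ENNReal.rpow_mul, mul_div_cancel₀ _ hR.ne'] at key
  simp_rw [ENNReal.mul_rpow_of_nonneg _ _ hR.le, ← ENNReal.rpow_mul]
  convert key using 3 <;> field_simp

lemma eSum_rpow_div (hp₀ : p ≠ 0) (hp : p ≠ ∞) (hs₀ : s ≠ 0) (hs : s ≠ ∞) (f : ι → ℝ≥0∞) :
    eSum s (fun i => f i ^ (p.toReal / s.toReal)) = eSum p f ^ (p.toReal / s.toReal) := by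
  have hP := (ENNReal.toReal_pos hp₀ hp).ne'
  have hS := (ENNReal.toReal_pos hs₀ hs).ne'
  rw [eSum_of_ne_top hp, eSum_of_ne_top hs]
  simp_rw [← ENNReal.rpow_mul, div_mul_cancel₀ _ hS]
  rw [one_div_mul_eq_div, div_div_cancel_left' hP, one_div]

lemma eSum_rpow_div_mul_self [p.HolderTriple s r] (hr₀ : r ≠ 0) (hp : p ≠ ∞) (hs : s ≠ ∞)
    (f : ι → ℝ≥0∞) :
    eSum r (fun i => f i ^ (p.toReal / s.toReal) * f i)
      = eSum p f ^ (p.toReal / s.toReal) * eSum p f := by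
  have hp₀ : p ≠ 0 := ne_zero_of_holderTriple p s hr₀
  have hs₀ : s ≠ 0 := ne_zero_of_holderTriple s p hr₀
  have hr : r ≠ ∞ := ne_top_of_le_ne_top hp (ENNReal.HolderTriple.le p s r)
  have hP := ENNReal.toReal_pos hp₀ hp
  have hS := ENNReal.toReal_pos hs₀ hs
  have div_add_one : p.toReal / s.toReal + 1 = p.toReal / r.toReal := by
    have := (ENNReal.HolderTriple.toReal r hP hS).inv_add_inv_eq_inv
    rw [div_eq_mul_inv p.toReal r.toReal, ← this, mul_add, mul_inv_cancel₀ hP.ne']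
    ring
  have rpow_mul_self (a : ℝ≥0∞) :
      a ^ (p.toReal / s.toReal) * a = a ^ (p.toReal / r.toReal) := by
    rw [← div_add_one, ENNReal.rpow_add_of_nonneg _ _ (by positivity) zero_le_one,
      ENNReal.rpow_one]
  simp_rw [rpow_mul_self]
  exact eSum_rpow_div hp₀ hp hr₀ hr f

lemma exists_eSum_le_eSum_mul [p.HolderTriple s r] (hr₀ : r ≠ 0) (f : ι → ℝ≥0∞) :
    ∃ g : ι → ℝ≥0∞, eSum s g ≤ 1 ∧ eSum p f ≤ eSum r (fun i => g i * f i) := by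
  classical
  have hp₀ : p ≠ 0 := ne_zero_of_holderTriple p s hr₀
  have hs₀ : s ≠ 0 := ne_zero_of_holderTriple s p hr₀
  -- Covers `p = ∞` and infinite entries; otherwise `f ^ (p / s)`, normalized, is extremal.
  by_cases hmax : ∃ i, eSum p f ≤ f i
  · obtain ⟨i, hi⟩ := hmax
    refine ⟨Pi.single i 1, (eSum_single hs₀ i 1).le, hi.trans ?_⟩
    simpa using le_eSum hr₀ (fun j => (Pi.single i 1 : ι → ℝ≥0∞) j * f j) i
  push Not at hmax
  have hA : eSum p f ≠ ∞ := fun h => by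
    obtain ⟨i, hi⟩ := (eSum_eq_top_iff hp₀).1 h
    exact (hmax i).not_ge (hi ▸ le_top)
  by_cases hA₀ : eSum p f = 0
  · exact ⟨fun _ => 0, (eSum_zero hs₀).trans_le zero_le_one, by simp [hA₀]⟩
  by_cases hs : s = ∞
  · subst hs
    obtain rfl : r = p := ENNReal.HolderTriple.unique p ∞ r p
    exact ⟨1, by simp [eSum_top], by simp⟩
  have hp : p ≠ ∞ := by
    rintro rfl
    rcases isEmpty_or_nonempty ι with _ | _
    · simp [eSum_top] at hA₀
    · obtain ⟨i, hi⟩ := exists_eq_ciSup_of_finite (f := f)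
      exact (hmax i).ne (by rw [hi, eSum_top])
  set φ := p.toReal / s.toReal
  refine ⟨fun i => (eSum p f ^ φ)⁻¹ * f i ^ φ, ?_, ?_⟩
  · rw [eSum_mul_left hs₀, eSum_rpow_div hp₀ hp hs₀ hs]
    exact ENNReal.inv_mul_le_one _
  · simp_rw [mul_assoc]
    rw [eSum_mul_left hr₀, eSum_rpow_div_mul_self hr₀ hp hs, ← mul_assoc,
      ENNReal.inv_mul_cancel (by simp [hA₀, hA]) (by simp [hA₀, hA]), one_mul]

lemma exists_eSum_le_enorm_sum_mul [q.HolderConjugate s] (a : ι → ℝ) :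
    ∃ b : ι → ℝ, eSum s (fun i => ‖b i‖ₑ) ≤ 1 ∧ eSum q (fun i => ‖a i‖ₑ) ≤ ‖∑ i, b i * a i‖ₑ := by
  have hs₀ : s ≠ 0 := ne_zero_of_holderTriple s q one_ne_zero
  obtain ⟨g, hg, hga⟩ := exists_eSum_le_eSum_mul (p := q) (s := s) one_ne_zero fun i => ‖a i‖ₑ
  have hg_enorm := enorm_toReal_of_eSum_le_one hs₀ hg
  refine ⟨fun i => (g i).toReal * SignType.sign (a i), (eSum_mono fun i => ?_).trans hg, ?_⟩
  · rw [enorm_mul, hg_enorm]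
    refine mul_le_of_le_one_right' ?_
    rcases SignType.sign (a i) with _ | _ | _ <;> simp
  · simp_rw [mul_assoc, sign_mul_self]
    rw [Real.enorm_of_nonneg (by positivity), ENNReal.ofReal_sum_of_nonneg (by intros; positivity)]
    refine hga.trans_eq ((eSum_one _).trans (Finset.sum_congr rfl fun i _ => ?_))
    rw [ENNReal.ofReal_mul ENNReal.toReal_nonneg, ← Real.enorm_of_nonneg ENNReal.toReal_nonneg,
      hg_enorm, Real.enorm_eq_ofReal_abs]

lemma enorm_sum_smul_le {E : Type*} [NormedAddCommGroup E] [NormedSpace ℝ E]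
    [s.HolderConjugate q] (a : ι → ℝ) (y : ι → E) :
    ‖∑ i, a i • y i‖ₑ ≤ eSum s (fun i => ‖a i‖ₑ) * eSum q (fun i => ‖y i‖ₑ) :=
  calc ‖∑ i, a i • y i‖ₑ ≤ ∑ i, ‖a i • y i‖ₑ := enorm_sum_le _ _
    _ = eSum 1 (fun i => ‖a i‖ₑ * ‖y i‖ₑ) := by simp_rw [eSum_one, enorm_smul]
    _ ≤ _ := eSum_mul_le one_ne_zero _ _

lemma enorm_sum_ite_smul_le {E : Type*} [NormedAddCommGroup E] [NormedSpace ℝ E]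
    [r.HolderConjugate q] (hs₀ : s ≠ 0) (hsr : s ≤ r) (P : ι → Prop) [DecidablePred P]
    (a : ι → ℝ) (y : ι → E) :
    ‖∑ i, (if P i then a i else 0) • y i‖ₑ
      ≤ eSum s (fun i => if P i then ‖a i‖ₑ else 0) * eSum q (fun i => if P i then ‖y i‖ₑ else 0) :=
  calc ‖∑ i, (if P i then a i else 0) • y i‖ₑ
      = ‖∑ i, (if P i then a i else 0) • (if P i then y i else 0)‖ₑ := by
        congr 1
        exact Finset.sum_congr rfl fun i _ => by split_ifs <;> simp
    _ ≤ eSum r (fun i => if P i then ‖a i‖ₑ else 0)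
          * eSum q (fun i => if P i then ‖y i‖ₑ else 0) := by
        refine (enorm_sum_smul_le (s := r) (q := q) _ _).trans_eq ?_
        simp_rw [apply_ite enorm, enorm_zero]
    _ ≤ _ := by
        gcongr
        exact eSum_anti hs₀ hsr _

lemma eSum_fiberwise [Fintype κ] [DecidableEq κ] (hp₀ : p ≠ 0) (c : ι → κ) (f : ι → ℝ≥0∞) :
    eSum p (fun k => eSum p fun i => if c i = k then f i else 0) = eSum p f := by
  by_cases hp : p = ∞
  · subst hp
    simp_rw [eSum_top]
    rw [iSup_comm]
    congr! with i
    refine le_antisymm (iSup_le fun k => by split_ifs <;> simp) (le_iSup_of_le (c i) (by simp))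
  · have hP := ENNReal.toReal_pos hp₀ hp
    rw [eSum_of_ne_top hp, eSum_of_ne_top hp]
    simp_rw [eSum_rpow_toReal hp₀ hp, ite_pow]
    rw [Finset.sum_comm]
    simp [hP]

lemma continuous_eSum : Continuous fun f : ι → ℝ≥0∞ => eSum p f := by
  by_cases hp : p = ∞
  · subst hp
    simp_rw [eSum_top, ← Finset.sup_univ_eq_iSup]
    exact Continuous.finset_sup_apply fun i _ => continuous_apply i
  · simp_rw [eSum_of_ne_top hp]
    exact ENNReal.continuous_rpow_const.comp
      (continuous_finsetSum _ fun i _ => ENNReal.continuous_rpow_const.comp (continuous_apply i))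

end eSum

section Summing

variable {X Y Z : Type*} [NormedAddCommGroup X] [NormedSpace ℝ X]
  [NormedAddCommGroup Y] [NormedSpace ℝ Y] [NormedAddCommGroup Z] [NormedSpace ℝ Z]
  {p q q' s r : ℝ≥0∞} {N n : ℕ}

lemma weakLq_le_iff {x : Fin n → X} {C : ℝ≥0∞} :
    weakLq q x ≤ C ↔ ∀ f : X →L[ℝ] ℝ, ‖f‖ ≤ 1 → eSum q (fun k => ‖f (x k)‖ₑ) ≤ C := by
  simp only [weakLq, iSup_le_iff, Subtype.forall, Real.enorm_eq_ofReal_abs]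

lemma piN_le_iff {T : X →L[ℝ] Y} {C : ℝ≥0∞} :
    piN p q n T ≤ C ↔ ∀ x : Fin n → X, weakLq q x ≤ 1 → eSum p (fun k => ‖T (x k)‖ₑ) ≤ C := by
  simp only [piN, iSup_le_iff, Subtype.forall, ofReal_norm]

lemma eSum_enorm_le_piN (T : X →L[ℝ] Y) {x : Fin n → X} (hx : weakLq q x ≤ 1) :
    eSum p (fun k => ‖T (x k)‖ₑ) ≤ piN p q n T :=
  piN_le_iff.1 le_rfl x hx

lemma piN_comp_le (T : Y →L[ℝ] Z) {S : X →L[ℝ] Y} (hS : ‖S‖ ≤ 1) :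
    piN p q n (T.comp S) ≤ piN p q n T := by
  refine piN_le_iff.2 fun x hx => eSum_enorm_le_piN T (x := fun k => S (x k)) ?_
  refine weakLq_le_iff.2 fun f hf => weakLq_le_iff.1 hx (f.comp S) ?_
  exact (f.opNorm_comp_le S).trans (mul_le_one₀ hf (norm_nonneg S) hS)

lemma exists_block_sum_eq_smul [q'.HolderConjugate q] (hs₀ : s ≠ 0) (hsq' : s ≤ q')
    {w : Fin N → X} (hw : weakLq q w ≤ 1) {a : Fin N → ℝ} (ha : eSum s (fun j => ‖a j‖ₑ) ≤ 1)
    (c : Fin N → Fin n) :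
    ∃ (L : Fin n → ℝ) (y : Fin n → X), eSum s (fun k => ‖L k‖ₑ) ≤ 1 ∧ weakLq q y ≤ 1 ∧
      ∀ k, ∑ j, (if c j = k then a j else 0) • w j = L k • y k := by
  have hq₀ : q ≠ 0 := ne_zero_of_holderTriple q q' one_ne_zero
  -- `L k` is the `ℓ_s`-norm of `a` on the `k`-th block, and `y k` is the block sum divided by it.
  set ℓ : Fin n → ℝ≥0∞ := fun k => eSum s fun j => if c j = k then ‖a j‖ₑ else 0
  have hℓ : eSum s ℓ ≤ 1 := (eSum_fiberwise hs₀ c _).trans_le ha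
  have hℓ_enorm := enorm_toReal_of_eSum_le_one hs₀ hℓ
  set z : Fin n → X := fun k => ∑ j, (if c j = k then a j else 0) • w j
  have hz (k : Fin n) : z k = (ℓ k).toReal • (ℓ k).toReal⁻¹ • z k := by
    rcases eq_or_ne (ℓ k).toReal 0 with h0 | h0
    · have hℓ₀ : ℓ k = 0 := by rw [← hℓ_enorm, h0, enorm_zero]
      rw [h0, zero_smul, ← enorm_eq_zero, ← nonpos_iff_eq_zero]
      refine (enorm_sum_ite_smul_le (q := q) hs₀ hsq' (c · = k) a w).trans ?_
      exact (mul_eq_zero_of_left hℓ₀ _).le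
    · exact (smul_inv_smul₀ h0 (z k)).symm
  refine ⟨fun k => (ℓ k).toReal, fun k => (ℓ k).toReal⁻¹ • z k, by simpa only [hℓ_enorm], ?_, hz⟩
  refine weakLq_le_iff.2 fun f hf => ?_
  have hfz (k : Fin n) : ‖f ((ℓ k).toReal⁻¹ • z k)‖ₑ
      ≤ eSum q fun j => if c j = k then ‖f (w j)‖ₑ else 0 := by
    rcases eq_or_ne (ℓ k).toReal 0 with h0 | h0
    · simp [h0]
    calc ‖f ((ℓ k).toReal⁻¹ • z k)‖ₑ
        = (ℓ k)⁻¹ * ‖∑ j, (if c j = k then a j else 0) • f (w j)‖ₑ := by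
          rw [map_smul, enorm_smul, enorm_inv h0, hℓ_enorm, map_sum]
          simp_rw [map_smul]
      _ ≤ (ℓ k)⁻¹ * (ℓ k * _) := by
          gcongr
          exact enorm_sum_ite_smul_le (q := q) hs₀ hsq' (c · = k) a (fun j => f (w j))
      _ ≤ _ := by
          rw [← mul_assoc]
          exact mul_le_of_le_one_left' (ENNReal.inv_mul_le_one _)
  calc eSum q (fun k => ‖f ((ℓ k).toReal⁻¹ • z k)‖ₑ) ≤ _ := eSum_mono hfz
    _ = eSum q (fun j => ‖f (w j)‖ₑ) := eSum_fiberwise hq₀ c _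
    _ ≤ 1 := weakLq_le_iff.1 hw f hf

lemma eSum_enorm_map_block_sum_le_piN [q'.HolderConjugate q] [p.HolderTriple s r] (hr₀ : r ≠ 0)
    (hsq' : s ≤ q') (T : X →L[ℝ] Y) {w : Fin N → X} (hw : weakLq q w ≤ 1)
    {a : Fin N → ℝ} (ha : eSum s (fun j => ‖a j‖ₑ) ≤ 1) (c : Fin N → Fin n) :
    eSum r (fun k => ‖T (∑ j, (if c j = k then a j else 0) • w j)‖ₑ) ≤ piN p q n T := by
  obtain ⟨L, y, hL, hy, hLy⟩ :=
    exists_block_sum_eq_smul (ne_zero_of_holderTriple s p hr₀) hsq' hw ha c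
  calc eSum r (fun k => ‖T (∑ j, (if c j = k then a j else 0) • w j)‖ₑ)
      = eSum r (fun k => ‖T (y k)‖ₑ * ‖L k‖ₑ) := by
        simp_rw [hLy, map_smul, enorm_smul, mul_comm]
    _ ≤ eSum p (fun k => ‖T (y k)‖ₑ) * eSum s (fun k => ‖L k‖ₑ) := eSum_mul_le hr₀ _ _
    _ ≤ piN p q n T := (mul_le_of_le_one_right' hL).trans (eSum_enorm_le_piN T hy)

lemma convex_eSum_enorm_le {ι : Type*} [Fintype ι] (hr : 1 ≤ r) (C : ℝ≥0∞) :
    Convex ℝ {y : ι → Y | eSum r (fun i => ‖y i‖ₑ) ≤ C} := by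
  have hr₀ : r ≠ 0 := (zero_lt_one.trans_le hr).ne'
  intro y hy z hz a b ha hb hab
  calc eSum r (fun i => ‖a • y i + b • z i‖ₑ)
      ≤ eSum r (fun i => ‖a‖ₑ * ‖y i‖ₑ + ‖b‖ₑ * ‖z i‖ₑ) :=
        eSum_mono fun i => by simpa only [enorm_smul] using enorm_add_le (a • y i) (b • z i)
    _ ≤ ‖a‖ₑ * eSum r (fun i => ‖y i‖ₑ) + ‖b‖ₑ * eSum r (fun i => ‖z i‖ₑ) := by
        simpa only [eSum_mul_left hr₀] using
          eSum_add_le hr (fun i => ‖a‖ₑ * ‖y i‖ₑ) fun i => ‖b‖ₑ * ‖z i‖ₑ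
    _ ≤ ‖a‖ₑ * C + ‖b‖ₑ * C := by
        gcongr
        exacts [hy, hz]
    _ = C := by
        rw [← add_mul, Real.enorm_of_nonneg ha, Real.enorm_of_nonneg hb,
          ← ENNReal.ofReal_add ha hb, hab, ENNReal.ofReal_one, one_mul]

lemma mem_convexHull_single {κ : Type*} [Fintype κ] [DecidableEq κ] [Nonempty κ] {u : κ → ℝ}
    (hu : ∑ k, |u k| ≤ 1) :
    u ∈ convexHull ℝ {v : κ → ℝ | ∃ k t, |t| ≤ 1 ∧ v = Pi.single k t} := by
  set K := {v : κ → ℝ | ∃ k t, |t| ≤ 1 ∧ v = Pi.single k t}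
  have hK₀ : (0 : κ → ℝ) ∈ convexHull ℝ K :=
    subset_convexHull ℝ K ⟨Classical.arbitrary κ, 0, by simp⟩
  have hnonneg : ∀ k ∈ Finset.univ, 0 ≤ |u k| := fun k _ => abs_nonneg (u k)
  rcases (Finset.sum_nonneg hnonneg).eq_or_lt with h0 | hpos
  · have hu₀ : u = 0 := funext fun k =>
      abs_eq_zero.1 ((Finset.sum_eq_zero_iff_of_nonneg hnonneg).1 h0.symm k (Finset.mem_univ k))
    exact hu₀ ▸ hK₀
  · have hmem : Finset.univ.centerMass (fun k => |u k|)
        (fun k => (Pi.single k (SignType.sign (u k) : ℝ) : κ → ℝ)) ∈ convexHull ℝ K := by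
      refine Finset.centerMass_mem_convexHull _ hnonneg hpos fun k _ =>
        ⟨k, _, ?_, rfl⟩
      rcases SignType.sign (u k) with _ | _ | _ <;> simp
    have := (convex_convexHull ℝ K).smul_mem_of_zero_mem hK₀ hmem ⟨hpos.le, hu⟩
    simpa only [Finset.centerMass, smul_inv_smul₀ hpos.ne', ← Pi.single_smul, smul_eq_mul,
      abs_mul_sign, Finset.univ_sum_single] using this

lemma eSum_enorm_map_sum_smul_le_piN [q'.HolderConjugate q] [p.HolderTriple s r] (hr : 1 ≤ r)
    (hsq' : s ≤ q') (T : X →L[ℝ] Y) {w : Fin N → X} (hw : weakLq q w ≤ 1)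
    {a : Fin N → ℝ} (ha : eSum s (fun j => ‖a j‖ₑ) ≤ 1)
    {v : Fin N → Fin n → ℝ} (hv : ∀ j, ∑ k, |v j k| ≤ 1) :
    eSum r (fun k => ‖T (∑ j, (a j * v j k) • w j)‖ₑ) ≤ piN p q n T := by
  have hr₀ : r ≠ 0 := (zero_lt_one.trans_le hr).ne'
  rcases isEmpty_or_nonempty (Fin n) with _ | _
  · rw [Subsingleton.elim (fun k => ‖T (∑ j, (a j * v j k) • w j)‖ₑ) fun _ => 0, eSum_zero hr₀]
    exact zero_le
  -- The left-hand side is convex in `v`, so `v` may be replaced by an extreme point of the product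
  -- of the `ℓ_1`-balls, for which the sums over `j` run over disjoint blocks.
  let A : (Fin N → Fin n → ℝ) →ₗ[ℝ] Fin n → Y :=
    { toFun u k := T (∑ j, (a j * u j k) • w j)
      map_add' u u' := by
        ext k
        simp [mul_add, add_smul, Finset.sum_add_distrib]
      map_smul' t u := by
        ext k
        simp [Finset.smul_sum, mul_left_comm _ t, mul_smul] }
  have hconvex := (convex_eSum_enorm_le (Y := Y) hr (piN p q n T)).linear_preimage A
  have hv_mem : v ∈ convexHull ℝ
      (Set.univ.pi fun _ => {u : Fin n → ℝ | ∃ k t, |t| ≤ 1 ∧ u = Pi.single k t}) := by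
    rw [convexHull_pi]
    exact fun j _ => mem_convexHull_single (hv j)
  refine convexHull_min (fun u hu => ?_) hconvex hv_mem
  choose c t ht huc using fun j => hu j (Set.mem_univ j)
  have hat : eSum s (fun j => ‖a j * t j‖ₑ) ≤ 1 := (eSum_mono fun j => by
    rw [enorm_mul, Real.enorm_eq_ofReal_abs (t j)]
    exact mul_le_of_le_one_right' (ENNReal.ofReal_le_one.2 (ht j))).trans ha
  have hA : A u = fun k => T (∑ j, (if c j = k then a j * t j else 0) • w j) := by
    ext k
    simp only [A, LinearMap.coe_mk, AddHom.coe_mk, huc, Pi.single_apply, mul_ite, mul_zero,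
      eq_comm]
  change eSum r (fun k => ‖A u k‖ₑ) ≤ piN p q n T
  simpa only [hA] using eSum_enorm_map_block_sum_le_piN hr₀ hsq' T hw hat c

end Summing

section lp

variable {E : ℕ → Type*} [∀ i, NormedAddCommGroup (E i)] {q q' s : ℝ≥0∞} {N : ℕ}

lemma enorm_le_one_iff {F : Type*} [SeminormedAddGroup F] {x : F} : ‖x‖ₑ ≤ 1 ↔ ‖x‖ ≤ 1 := by
  rw [← ofReal_norm, ENNReal.ofReal_le_one]

lemma lp_enorm_rpow_toReal {ι : Type*} {F : ι → Type*} [∀ i, NormedAddCommGroup (F i)]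
    [Fact (1 ≤ q)] (hq : q ≠ ∞) (b : lp F q) :
    ‖b‖ₑ ^ q.toReal = ∑' i, ‖b i‖ₑ ^ q.toReal := by
  have hQ := ENNReal.toReal_pos (zero_lt_one.trans_le Fact.out).ne' hq
  have hsum := lp.hasSum_norm hQ b
  rw [← ofReal_norm, ENNReal.ofReal_rpow_of_nonneg (norm_nonneg b) hQ.le, ← hsum.tsum_eq,
    ENNReal.ofReal_tsum_of_nonneg (fun i => by positivity) hsum.summable]
  refine tsum_congr fun i => ?_
  rw [← ofReal_norm, ENNReal.ofReal_rpow_of_nonneg (norm_nonneg _) hQ.le]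

lemma lp_enorm_eq_iSup_eSum [Fact (1 ≤ q)] (b : lp E q) :
    ‖b‖ₑ = ⨆ N, eSum q fun j : Fin N => ‖b j‖ₑ := by
  have hq₀ : q ≠ 0 := (zero_lt_one.trans_le Fact.out).ne'
  by_cases hq : q = ∞
  · subst hq
    refine le_antisymm ?_ (iSup_le fun N => (eSum_top _).trans_le (iSup_le fun j => ?_))
    · set C := ⨆ N, eSum ∞ fun j : Fin N => ‖b j‖ₑ
      rcases eq_or_ne C ∞ with hC | hC
      · exact le_top.trans_eq hC.symm
      have hbC (i : ℕ) : ‖b i‖ₑ ≤ C :=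
        (le_eSum hq₀ (fun j : Fin (i + 1) => ‖b j‖ₑ) (Fin.last i)).trans
          (le_iSup (fun N => eSum ∞ fun j : Fin N => ‖b j‖ₑ) (i + 1))
      rw [← ofReal_norm, ENNReal.ofReal_le_iff_le_toReal hC]
      refine lp.norm_le_of_forall_le ENNReal.toReal_nonneg fun i => ?_
      rw [← ENNReal.ofReal_le_iff_le_toReal hC, ofReal_norm]
      exact hbC i
    · exact enorm_le_iff_norm_le.2 (lp.norm_apply_le_norm hq₀ b j)
  · have hQ := ENNReal.toReal_pos hq₀ hq
    apply (ENNReal.orderIsoRpow q.toReal hQ).injective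
    simp_rw [OrderIso.map_iSup, ENNReal.orderIsoRpow_apply, lp_enorm_rpow_toReal hq,
      eSum_rpow_toReal hq₀ hq, ENNReal.tsum_eq_iSup_nat, Finset.sum_range]

lemma eSum_le_lp_enorm [Fact (1 ≤ q)] (b : lp E q) :
    eSum q (fun j : Fin N => ‖b j‖ₑ) ≤ ‖b‖ₑ := by
  rw [lp_enorm_eq_iSup_eSum]
  exact le_iSup (fun N => eSum q fun j : Fin N => ‖b j‖ₑ) N

lemma lp_norm_linearMapOfLE_le [∀ i, NormedSpace ℝ (E i)] [Fact (1 ≤ s)] [Fact (1 ≤ q)]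
    (h : s ≤ q) (b : lp E s) : ‖lp.linearMapOfLE ℝ E h b‖ ≤ ‖b‖ := by
  rw [← enorm_le_iff_norm_le, lp_enorm_eq_iSup_eSum, lp_enorm_eq_iSup_eSum,
    lp.coe_linearMapOfLE_apply]
  exact iSup_mono fun N => eSum_anti (zero_lt_one.trans_le Fact.out).ne' h _

/-- The sequence in `ℓ_q` starting with `a` and continued by zeros. -/
def finLp (q : ℝ≥0∞) (a : Fin N → ℝ) : lp (fun _ : ℕ => ℝ) q :=
  ∑ j : Fin N, lp.single q (j : ℕ) (a j)

lemma finLp_apply (a : Fin N → ℝ) (k : ℕ) :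
    finLp q a k = if h : k < N then a ⟨k, h⟩ else 0 := by
  rw [finLp, lp.coeFn_sum, Finset.sum_apply]
  split_ifs with h
  · rw [Finset.sum_eq_single_of_mem ⟨k, h⟩ (Finset.mem_univ _)]
    · simp
    · exact fun j _ hj => lp.single_apply_ne q _ _ fun hk => hj (Fin.ext hk.symm)
  · exact Finset.sum_eq_zero fun j _ => lp.single_apply_ne q _ _ (by omega)

lemma enorm_finLp_le [Fact (1 ≤ q)] (a : Fin N → ℝ) :
    ‖finLp q a‖ₑ ≤ eSum q fun j => ‖a j‖ₑ := by
  have hq₀ : q ≠ 0 := (zero_lt_one.trans_le Fact.out).ne'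
  by_cases hq : q = ∞
  · subst hq
    rw [lp_enorm_eq_iSup_eSum]
    refine iSup_le fun M => (eSum_top _).trans_le (iSup_le fun j => ?_)
    rw [finLp_apply]
    split_ifs with h
    · exact le_eSum hq₀ (fun j => ‖a j‖ₑ) ⟨j, h⟩
    · simp
  · have hQ := ENNReal.toReal_pos hq₀ hq
    rw [← ENNReal.rpow_le_rpow_iff hQ, lp_enorm_rpow_toReal hq, eSum_rpow_toReal hq₀ hq,
      tsum_eq_sum (s := Finset.range N), Finset.sum_range]
    · simp [finLp_apply]
    · intro k hk
      simp [finLp_apply, Finset.mem_range.not.1 hk, hQ]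

lemma tendsto_finLp [Fact (1 ≤ q)] (hq : q ≠ ∞) (b : lp (fun _ : ℕ => ℝ) q) :
    Filter.Tendsto (fun N => finLp q fun j : Fin N => b j) Filter.atTop (nhds b) := by
  simpa only [finLp, Finset.sum_range] using (lp.hasSum_single hq b).tendsto_sum_nat

variable [Fact (1 ≤ s)] [Fact (1 ≤ q')]

/-- The bilinear map `(σ, τ) ↦ σ * τ` on `ℓ_s × ℓ_∞`, with values in `ℓ_{q'} ⊇ ℓ_s`, so that
`diagonal h σ` is the diagonal operator `D_σ`. -/
def diagonal (h : s ≤ q') :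
    lp (fun _ : ℕ => ℝ) s →L[ℝ] lp (fun _ : ℕ => ℝ) ∞ →L[ℝ] lp (fun _ : ℕ => ℝ) q' :=
  ((lp.linearMapOfLE ℝ (fun _ : ℕ => ℝ) h).mkContinuous 1 fun b => by
      simpa using lp_norm_linearMapOfLE_le h b).postcomp _ ∘L
    lp.holderL s (fun _ => ContinuousLinearMap.mul ℝ ℝ) (K := 1)
      fun _ => ContinuousLinearMap.opNorm_mul_le ℝ ℝ

@[simp]
lemma diagonal_apply (h : s ≤ q') (σ : lp (fun _ : ℕ => ℝ) s) (τ : lp (fun _ : ℕ => ℝ) ∞) (k : ℕ) :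
    diagonal h σ τ k = σ k * τ k := rfl

lemma norm_diagonal_le (h : s ≤ q') (σ : lp (fun _ : ℕ => ℝ) s) : ‖diagonal h σ‖ ≤ ‖σ‖ := by
  refine ContinuousLinearMap.opNorm_le_bound _ (norm_nonneg σ) fun τ => ?_
  have hmul : ‖lp.holderL s (fun _ => ContinuousLinearMap.mul ℝ ℝ) (K := 1)
      (fun _ => ContinuousLinearMap.opNorm_mul_le ℝ ℝ) σ τ‖ ≤ 1 * ‖σ‖ * ‖τ‖ :=
    ContinuousLinearMap.le_of_opNorm₂_le_of_le _ (lp.norm_holderL_le s _ _) le_rfl le_rfl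
  rw [one_mul] at hmul
  exact (lp_norm_linearMapOfLE_le h _).trans hmul

lemma diagonal_finLp (h : s ≤ q') (a : Fin N → ℝ) (τ : lp (fun _ : ℕ => ℝ) ∞) :
    diagonal h (finLp s a) τ = finLp q' fun j => a j * τ j := by
  ext k
  rw [diagonal_apply, finLp_apply, finLp_apply]
  split_ifs <;> simp

end lp

section Factorization

variable {X Y : Type*} [NormedAddCommGroup X] [NormedSpace ℝ X]
  [NormedAddCommGroup Y] [NormedSpace ℝ Y]
  {p q q' s r : ℝ≥0∞} [Fact (1 ≤ q')] {N n : ℕ}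

/-- The operator `ℓ_{q'} → X` mapping the `k`-th unit vector to `x k` for `k < n` and to `0` for
`k ≥ n`. -/
def synthesis (q' : ℝ≥0∞) [Fact (1 ≤ q')] (x : Fin n → X) : lp (fun _ : ℕ => ℝ) q' →L[ℝ] X :=
  ∑ k : Fin n, (lp.evalCLM ℝ (fun _ : ℕ => ℝ) q' (k : ℕ)).smulRight (x k)

lemma synthesis_apply (x : Fin n → X) (b : lp (fun _ : ℕ => ℝ) q') :
    synthesis q' x b = ∑ k : Fin n, b k • x k := by
  simp only [synthesis, sum_apply, ContinuousLinearMap.smulRight_apply]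
  rfl

lemma enorm_synthesis_le [q.HolderConjugate q'] (x : Fin n → X) :
    ‖synthesis q' x‖ₑ ≤ weakLq q x := by
  refine ContinuousLinearMap.opENorm_le_bound _ fun b => ?_
  obtain ⟨f, hf, hfb⟩ := exists_dual_vector'' ℝ (synthesis q' x b)
  calc ‖synthesis q' x b‖ₑ = ‖f (synthesis q' x b)‖ₑ := by
        rw [hfb]
        simp only [RCLike.ofReal_real_eq_id, id_eq, enorm_norm]
    _ = ‖∑ k : Fin n, b k • f (x k)‖ₑ := by simp only [synthesis_apply, map_sum, map_smul]
    _ ≤ eSum q' (fun k : Fin n => ‖b k‖ₑ) * eSum q fun k => ‖f (x k)‖ₑ := enorm_sum_smul_le _ _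
    _ ≤ ‖b‖ₑ * weakLq q x := mul_le_mul' (eSum_le_lp_enorm b) (weakLq_le_iff.1 le_rfl f hf)
    _ = weakLq q x * ‖b‖ₑ := mul_comm _ _

lemma finLp_eq_sum_smul (a : Fin N → ℝ) :
    finLp q a = ∑ j : Fin N, a j • lp.single (E := fun _ : ℕ => ℝ) q (j : ℕ) (1 : ℝ) := by
  simp only [finLp, ← lp.single_smul, smul_eq_mul, mul_one]

lemma weakLq_map_single_le [q.HolderConjugate q'] (V : lp (fun _ : ℕ => ℝ) q' →L[ℝ] X) :
    weakLq q (fun j : Fin N => V (lp.single q' (j : ℕ) 1)) ≤ ‖V‖ₑ := by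
  refine weakLq_le_iff.2 fun f hf => ?_
  obtain ⟨b, hb, hfb⟩ := exists_eSum_le_enorm_sum_mul (q := q) (s := q')
    fun j : Fin N => f (V (lp.single q' (j : ℕ) 1))
  have hsum : ∑ j, b j * f (V (lp.single q' (j : ℕ) 1)) = (f ∘L V) (finLp q' b) := by
    simp [finLp_eq_sum_smul]
  calc eSum q (fun j : Fin N => ‖f (V (lp.single q' (j : ℕ) 1))‖ₑ)
      ≤ ‖(f ∘L V) (finLp q' b)‖ₑ := hsum ▸ hfb
    _ ≤ ‖f‖ₑ * (‖V‖ₑ * ‖finLp q' b‖ₑ) := (f.le_opENorm _).trans (by gcongr; exact V.le_opENorm _)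
    _ ≤ 1 * (‖V‖ₑ * 1) := by
        gcongr
        exacts [enorm_le_one_iff.2 hf, (enorm_finLp_le b).trans hb]
    _ = ‖V‖ₑ := by rw [one_mul, mul_one]

lemma sum_abs_apply_le_one {x : Fin n → lp (fun _ : ℕ => ℝ) ∞} (hx : weakLq 1 x ≤ 1) (j : ℕ) :
    ∑ k, |x k j| ≤ 1 := by
  have hf : ‖lp.evalCLM ℝ (fun _ : ℕ => ℝ) ∞ j‖ ≤ 1 :=
    ContinuousLinearMap.opNorm_le_bound _ zero_le_one fun b =>
      (lp.norm_apply_le_norm ENNReal.top_ne_zero b j).trans_eq (one_mul _).symm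
  have h := weakLq_le_iff.1 hx _ hf
  simp_rw [eSum_one, Real.enorm_eq_ofReal_abs] at h
  rwa [← ENNReal.ofReal_sum_of_nonneg fun _ _ => abs_nonneg _, ENNReal.ofReal_le_one] at h

variable [Fact (1 ≤ s)]

lemma synthesis_diagonal_finLp_single (hsq' : s ≤ q') (x : Fin n → X) (a : Fin n → ℝ) (k : Fin n) :
    synthesis q' x (diagonal hsq' (finLp s a) (lp.single ∞ (k : ℕ) 1)) = a k • x k := by
  rw [synthesis_apply, Finset.sum_eq_single_of_mem k (Finset.mem_univ k)]
  · simp [finLp_apply]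
  · intro j _ hj
    rw [diagonal_apply, lp.single_apply_ne ∞ _ _ fun h => hj (Fin.ext h), mul_zero, zero_smul]

variable [p.HolderTriple s r]

lemma eSum_enorm_map_diagonal_finLp_le_piN [q.HolderConjugate q'] (hr : 1 ≤ r) (hsq' : s ≤ q')
    (T : X →L[ℝ] Y) {V : lp (fun _ : ℕ => ℝ) q' →L[ℝ] X} (hV : ‖V‖ₑ ≤ 1) {a : Fin N → ℝ}
    (ha : eSum s (fun j => ‖a j‖ₑ) ≤ 1) {x : Fin n → lp (fun _ : ℕ => ℝ) ∞}
    (hx : weakLq 1 x ≤ 1) :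
    eSum r (fun k => ‖T (V (diagonal hsq' (finLp s a) (x k)))‖ₑ) ≤ piN p q n T := by
  have h := eSum_enorm_map_sum_smul_le_piN (q' := q') (p := p) hr hsq' T
    ((weakLq_map_single_le (q := q) V).trans hV) ha (v := fun j k => x k j)
    (sum_abs_apply_le_one hx ·)
  simp_rw [diagonal_finLp, finLp_eq_sum_smul, map_sum, map_smul] at h ⊢
  exact h

lemma piN_comp_diagonal_le [q.HolderConjugate q'] (hr : 1 ≤ r) (hsq' : s ≤ q')
    (T : X →L[ℝ] Y) {σ : lp (fun _ : ℕ => ℝ) s} (hσ : ‖σ‖ ≤ 1)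
    {V : lp (fun _ : ℕ => ℝ) q' →L[ℝ] X} (hV : ‖V‖ ≤ 1) :
    piN r 1 n (T ∘L V ∘L diagonal hsq' σ) ≤ piN p q n T := by
  by_cases hs : s = ∞
  · subst hs
    obtain rfl : q' = ∞ := top_le_iff.1 hsq'
    obtain rfl : r = p := ENNReal.HolderTriple.unique p ∞ r p
    obtain rfl : q = 1 := ENNReal.HolderConjugate.unique ∞ q 1
    exact piN_comp_le T ((ContinuousLinearMap.opNorm_comp_le _ _).trans
      (mul_le_one₀ hV (norm_nonneg _) ((norm_diagonal_le hsq' σ).trans hσ)))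
  · refine piN_le_iff.2 fun x hx => ?_
    have hcont : Continuous fun σ => eSum r fun k => ‖T (V (diagonal hsq' σ (x k)))‖ₑ :=
      continuous_eSum.comp (continuous_pi fun k => by fun_prop)
    refine le_of_tendsto' ((hcont.tendsto σ).comp (tendsto_finLp hs σ)) fun N => ?_
    exact eSum_enorm_map_diagonal_finLp_le_piN hr hsq' T (enorm_le_one_iff.2 hV)
      ((eSum_le_lp_enorm σ).trans (enorm_le_one_iff.2 hσ)) hx

lemma exists_eSum_le_piN_comp_diagonal [q.HolderConjugate q'] (hr₀ : r ≠ 0) (hsq' : s ≤ q')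
    (T : X →L[ℝ] Y) {x : Fin n → X} (hx : weakLq q x ≤ 1) :
    ∃ (σ : lp (fun _ : ℕ => ℝ) s) (V : lp (fun _ : ℕ => ℝ) q' →L[ℝ] X), ‖σ‖ ≤ 1 ∧ ‖V‖ ≤ 1 ∧
      eSum p (fun k => ‖T (x k)‖ₑ) ≤ piN r 1 n (T ∘L V ∘L diagonal hsq' σ) := by
  obtain ⟨g, hg, hTg⟩ := exists_eSum_le_eSum_mul (p := p) (s := s) hr₀ fun k => ‖T (x k)‖ₑ
  have hs₀ : s ≠ 0 := (zero_lt_one.trans_le Fact.out).ne'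
  have hg_enorm := enorm_toReal_of_eSum_le_one hs₀ hg
  refine ⟨finLp s fun k => (g k).toReal, synthesis q' x, enorm_le_one_iff.1 ?_,
    enorm_le_one_iff.1 ((enorm_synthesis_le x).trans hx), ?_⟩
  · exact (enorm_finLp_le _).trans (by simpa only [hg_enorm] using hg)
  · have hunit : weakLq 1 (fun k : Fin n => lp.single (E := fun _ : ℕ => ℝ) ∞ (k : ℕ) 1) ≤ 1 :=
      (weakLq_map_single_le (ContinuousLinearMap.id ℝ _)).trans
        (enorm_le_one_iff.2 ContinuousLinearMap.norm_id_le)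
    refine hTg.trans (le_of_eq_of_le ?_ (eSum_enorm_le_piN _ hunit))
    simp only [ContinuousLinearMap.comp_apply, synthesis_diagonal_finLp_single, map_smul,
      enorm_smul, hg_enorm]

theorem statement3_general [q.HolderConjugate q'] (hr : 1 ≤ r) (hsq' : s ≤ q') (T : X →L[ℝ] Y)
    (n : ℕ) :
    piN p q n T = sSup { a : ℝ≥0∞ |
      ∃ (σ : lp (fun _ : ℕ => ℝ) s) (V : lp (fun _ : ℕ => ℝ) q' →L[ℝ] X)
        (D : lp (fun _ : ℕ => ℝ) ∞ →L[ℝ] lp (fun _ : ℕ => ℝ) q'),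
        ‖σ‖ ≤ 1 ∧ ‖V‖ ≤ 1 ∧ (∀ (τ : lp (fun _ : ℕ => ℝ) ∞) (k : ℕ), D τ k = σ k * τ k) ∧
        a = piN r 1 n (T.comp (V.comp D)) } := by
  apply le_antisymm
  · refine piN_le_iff.2 fun x hx => ?_
    obtain ⟨σ, V, hσ, hV, hTx⟩ :=
      exists_eSum_le_piN_comp_diagonal (p := p) (r := r) (zero_lt_one.trans_le hr).ne' hsq' T hx
    exact hTx.trans (le_sSup ⟨σ, V, diagonal hsq' σ, hσ, hV, diagonal_apply hsq' σ, rfl⟩)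
  · refine sSup_le ?_
    rintro _ ⟨σ, V, D, hσ, hV, hD, rfl⟩
    obtain rfl : D = diagonal hsq' σ := by
      ext τ k
      rw [hD, diagonal_apply]
    exact piN_comp_diagonal_le hr hsq' T hσ hV

end Factorization

/-- quotient formula. For `1 ≤ q ≤ p ≤ ∞` and `1 ≤ r ≤ s ≤ q'`
with `1/r = 1/p + 1/s`, the `n`-vector `(p,q)`-summing norm of `T` equals the
supremum of the `n`-vector `(r,1)`-summing norms of `T ∘ V ∘ D_σ` over all
`V : ℓ_{q'} → X` of norm at most `1` and all diagonal operators
`D_σ : ℓ_∞ → ℓ_{q'}` with `‖σ‖_s ≤ 1`. -/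
theorem statement3 (q p r s q' : ℝ≥0∞) (hq : 1 ≤ q) (hqp : q ≤ p)
    (hconj : 1 / q + 1 / q' = 1) (hq' : 1 ≤ q')
    (hr : 1 ≤ r) (hrs : r ≤ s) (hsq' : s ≤ q') (hrps : 1 / r = 1 / p + 1 / s)
    (X Y : Type*) [NormedAddCommGroup X] [NormedSpace ℝ X] [CompleteSpace X]
    [NormedAddCommGroup Y] [NormedSpace ℝ Y] [CompleteSpace Y]
    (T : X →L[ℝ] Y) (n : ℕ) :
    haveI : Fact (1 ≤ q') := ⟨hq'⟩
    haveI : Fact (1 ≤ s) := ⟨le_trans hr hrs⟩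
    piN p q n T = sSup { a : ℝ≥0∞ |
      ∃ (σ : lp (fun _ : ℕ => ℝ) s) (V : lp (fun _ : ℕ => ℝ) q' →L[ℝ] X)
        (D : lp (fun _ : ℕ => ℝ) ∞ →L[ℝ] lp (fun _ : ℕ => ℝ) q'),
        ‖σ‖ ≤ 1 ∧ ‖V‖ ≤ 1 ∧ (∀ (τ : lp (fun _ : ℕ => ℝ) ∞) (k : ℕ), D τ k = σ k * τ k) ∧
        a = piN r 1 n (T.comp (V.comp D)) } := by
  have : Fact (1 ≤ q') := ⟨hq'⟩
  have : Fact (1 ≤ s) := ⟨le_trans hr hrs⟩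
  have : q.HolderConjugate q' := ⟨by simpa using hconj⟩
  have : p.HolderTriple s r := ⟨by simpa using hrps.symm⟩
  exact statement3_general hr hsq' T n

end
end

section
/- Let 1 ≤ q ≤ p < ∞ with 1/q = 1/p + 1/r (where q ≤ r ≤ ∞), and assume q ≠ 2 and 2 < r ≤ ∞. Then there exists α > 1 with the following property: for every constant c > 0 and every sequence (k_n) of natural numbers such that π_{p,q}(T) ≤ c · π_{p,q}^{k_n}(T) holds for every n and every bounded operator T between real Banach spaces of rank at most n, there exists a constant c̄ such that n^α ≤ c̄ · k_n for all n. -/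
open scoped ENNReal NNReal BigOperators

noncomputable section

/-!
Let `G` be an `N × N` matrix with unit diagonal and off-diagonal entries at most `μ`, and let `T` be
multiplication by `G` from `(ℓ_q^N)*` to `ℓ_∞^N`. The coordinate functionals show that
`π_{p,q}(T) ≥ N ^ (1 / p)`. For `k` vectors of weak `ℓ_q`-norm at most one, the diagonal of `G`
contributes at most `k ^ (1 / p)`, while the off-diagonal part contributes `μ` times the `ℓ_p`-norm
of the `ℓ_1`-norms `w_j` of the vectors, which is at most `N ^ β * (k ^ (1 / p) + N ^ (1 / p))` with
some `β < 1 / 2`. For `q > 2` this is the bound `w_j ≤ N ^ (1 / q)`. For `q < 2` it follows by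
interpolation between the `ℓ_q`-norm of `w`, which is at most `N`, and its `ℓ_s`-norm,
`1 / s = 1 / q - 1 / 2`, which is at most `N ^ (1 / q)`: choosing signs such that a signed sum of
weighted rows is at least as long as if they were orthogonal bounds the `ℓ_s`-norm of their
Euclidean lengths. The condition `r > 2` says that `p` lies below the exponent `s` at `q < 2`.

Hence `μ * N ^ β` small forces `N ≲ k`. Polynomials of degree at most two over the field with `ℓ`
elements, `ℓ ^ 2 ≈ n`, agree pairwise in at most two points, so the Gram matrix of the normalised
indicators of their graphs has rank at most `ℓ ^ 2` and `μ = 2 / ℓ ≈ n ^ (-1 / 2)`. This leaves room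
for `N = n ^ α` with some `α > 1`.
-/

/-! ### Contractions of `ℓ_q` -/

section Holder

variable {ι : Type*}

theorem sum_rpow_mul_rpow_le (s : Finset ι) {f g : ι → ℝ} (hf : ∀ i, 0 ≤ f i) (hg : ∀ i, 0 ≤ g i)
    {a b : ℝ} (ha : 0 ≤ a) (hb : 0 ≤ b) (hab : a + b = 1) :
    ∑ i ∈ s, f i ^ a * g i ^ b ≤ (∑ i ∈ s, f i) ^ a * (∑ i ∈ s, g i) ^ b := by
  rcases ha.eq_or_lt with rfl | ha
  · simp [show b = 1 by linarith]
  rcases hb.eq_or_lt with rfl | hb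
  · simp [show a = 1 by linarith]
  have hconj : a⁻¹.HolderConjugate b⁻¹ :=
    Real.holderConjugate_iff.2 ⟨(one_lt_inv₀ ha).2 (by linarith), by simpa using hab⟩
  simpa only [one_div, inv_inv, Real.rpow_rpow_inv (hf _) ha.ne',
    Real.rpow_rpow_inv (hg _) hb.ne'] using
    Real.inner_le_Lp_mul_Lq_of_nonneg s hconj (fun i _ ↦ Real.rpow_nonneg (hf i) a)
      (fun i _ ↦ Real.rpow_nonneg (hg i) b)

theorem sum_rpow_convex_comb_le (s : Finset ι) {f : ι → ℝ} (hf : ∀ i, 0 ≤ f i) {x y a b : ℝ}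
    (hx : 0 ≤ x) (hy : 0 ≤ y) (ha : 0 ≤ a) (hb : 0 ≤ b) (hab : a + b = 1) :
    ∑ i ∈ s, f i ^ (x * a + y * b) ≤ (∑ i ∈ s, f i ^ x) ^ a * (∑ i ∈ s, f i ^ y) ^ b := by
  simpa only [← Real.rpow_mul (hf _), ← Real.rpow_add_of_nonneg (hf _) (mul_nonneg hx ha)
    (mul_nonneg hy hb)] using
    sum_rpow_mul_rpow_le s (fun i ↦ Real.rpow_nonneg (hf i) x)
      (fun i ↦ Real.rpow_nonneg (hf i) y) ha hb hab

theorem sum_abs_rpow_le_card_rpow_mul_norm_rpow [Fintype ι] {q : ℝ} (hq0 : 0 ≤ q) (hq2 : q ≤ 2)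
    (z : ι → ℝ) :
    ∑ i, |z i| ^ q ≤ (Fintype.card ι : ℝ) ^ (1 - q / 2) * ‖WithLp.toLp 2 z‖ ^ q := by
  have hpow (i : ι) : |z i| ^ q = 1 ^ (1 - q / 2) * (z i ^ 2) ^ (q / 2) := by
    rw [Real.one_rpow, one_mul, ← sq_abs, ← Real.rpow_natCast_mul (abs_nonneg _)]
    congr 1
    push_cast
    ring
  have hnorm : ‖WithLp.toLp 2 z‖ ^ q = (∑ i, z i ^ 2) ^ (q / 2) := by
    rw [← EuclideanSpace.real_norm_sq_eq, ← Real.rpow_natCast_mul (norm_nonneg _)]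
    congr 1
    push_cast
    ring
  calc ∑ i, |z i| ^ q = ∑ i, 1 ^ (1 - q / 2) * (z i ^ 2) ^ (q / 2) := by simp only [hpow]
    _ ≤ (∑ _i : ι, 1) ^ (1 - q / 2) * (∑ i, z i ^ 2) ^ (q / 2) :=
        sum_rpow_mul_rpow_le _ (fun _ ↦ zero_le_one) (fun i ↦ sq_nonneg (z i)) (by linarith)
          (by linarith) (by ring)
    _ = (Fintype.card ι : ℝ) ^ (1 - q / 2) * ‖WithLp.toLp 2 z‖ ^ q := by simp [hnorm]

end Holder

theorem exists_signs_sum_norm_sq_le {E κ : Type*} [NormedAddCommGroup E] [InnerProductSpace ℝ E]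
    (v : κ → E) (s : Finset κ) :
    ∃ ε : κ → ℝ, (∀ j, |ε j| = 1) ∧ ∑ j ∈ s, ‖v j‖ ^ 2 ≤ ‖∑ j ∈ s, ε j • v j‖ ^ 2 := by
  classical
  induction s using Finset.induction_on with
  | empty => exact ⟨1, by simp, by simp⟩
  | insert a s ha ih =>
    obtain ⟨ε, hε, hle⟩ := ih
    obtain ⟨d, hd, hinner⟩ : ∃ d : ℝ, |d| = 1 ∧ 0 ≤ inner ℝ (d • v a) (∑ j ∈ s, ε j • v j) := by
      rcases le_total 0 (inner ℝ (v a) (∑ j ∈ s, ε j • v j)) with h | h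
      · exact ⟨1, by simp, by simpa using h⟩
      · exact ⟨-1, by simp, by simpa using h⟩
    refine ⟨Function.update ε a d, fun j ↦ ?_, ?_⟩
    · rcases eq_or_ne j a with rfl | hj
      · simpa using hd
      · simpa [hj] using hε j
    · have hsum : ∑ j ∈ s, Function.update ε a d j • v j = ∑ j ∈ s, ε j • v j :=
        Finset.sum_congr rfl fun j hj ↦ by
          rw [Function.update_of_ne (ne_of_mem_of_not_mem hj ha)]
      rw [Finset.sum_insert ha, Finset.sum_insert ha, Function.update_self, hsum, norm_add_sq_real,
        norm_smul, Real.norm_eq_abs, hd, one_mul]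
      linarith

/-- The matrix `B` has norm at most one as an operator from `ℓ_q^ι` to `ℓ_q^κ`. The coordinates of
a finite family in `(ℓ_q^ι)*` form such a matrix exactly when the weak `ℓ_q`-norm of the family is
at most one. -/
def IsLpContraction {ι κ : Type*} [Fintype ι] [Fintype κ] (q : ℝ) (B : Matrix κ ι ℝ) : Prop :=
  ∀ z : ι → ℝ, ∑ j, |B.mulVec z j| ^ q ≤ ∑ i, |z i| ^ q

/-- The exponent `β` for which the `ℓ_1`-norms of the rows of an `ℓ_q`-contraction with `N` columns
and `k` rows have `ℓ_p`-norm at most `N ^ β * (k ^ (1 / p) + N ^ (1 / p))`. -/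
def rowSumExponent (q p : ℝ) : ℝ :=
  if q < 2 then 1 / 2 - (1 / q - 1 / 2) * (1 - 2 * (1 / q - 1 / p)) else 1 / q

theorem rowSumExponent_nonneg {q p : ℝ} (hq : 1 ≤ q) (hqp : q ≤ p) (h : 1 / q - 1 / p < 1 / 2) :
    0 ≤ rowSumExponent q p := by
  have hq0 : 0 < q := by linarith
  have hqp' : 1 / p ≤ 1 / q := one_div_le_one_div_of_le hq0 hqp
  rw [rowSumExponent]
  split_ifs with hq2
  · have hq1 : 1 / q ≤ 1 := (div_le_one hq0).2 hq
    have := one_div_lt_one_div_of_lt hq0 hq2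
    have := mul_le_mul (show 1 / q - 1 / 2 ≤ 1 / 2 by linarith)
      (show 1 - 2 * (1 / q - 1 / p) ≤ 1 by linarith) (by linarith) (by norm_num)
    linarith
  · positivity

theorem rowSumExponent_lt_half {q p : ℝ} (hq : 0 < q) (hq2 : q ≠ 2) (h : 1 / q - 1 / p < 1 / 2) :
    rowSumExponent q p < 1 / 2 := by
  rw [rowSumExponent]
  split_ifs with hlt
  · have := one_div_lt_one_div_of_lt hq hlt
    have := mul_pos (show 0 < 1 / q - 1 / 2 by linarith)
      (show 0 < 1 - 2 * (1 / q - 1 / p) by linarith)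
    linarith
  · exact one_div_lt_one_div_of_lt two_pos ((not_lt.1 hlt).lt_of_ne' hq2)

namespace IsLpContraction

variable {ι κ : Type*} [Fintype ι] [Fintype κ] {q : ℝ} {B : Matrix κ ι ℝ}

theorem sum_abs_apply_rpow_le_one (hB : IsLpContraction q B) (hq : 0 < q) (i : ι) :
    ∑ j, |B j i| ^ q ≤ 1 := by
  classical
  simpa [Pi.single_apply, apply_ite, Real.zero_rpow hq.ne'] using hB (Pi.single i 1)

theorem abs_apply_le_one (hB : IsLpContraction q B) (hq : 0 < q) (j : κ) (i : ι) : |B j i| ≤ 1 := by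
  have h : |B j i| ^ q ≤ 1 := (Finset.single_le_sum (f := fun j ↦ |B j i| ^ q)
    (fun j _ ↦ by positivity) (Finset.mem_univ j)).trans (hB.sum_abs_apply_rpow_le_one hq i)
  exact (Real.rpow_le_rpow_iff (abs_nonneg _) zero_le_one hq).1 (by simpa using h)

theorem rowSum_le (hB : IsLpContraction q B) (hq : 0 < q) (j : κ) :
    ∑ i, |B j i| ≤ (Fintype.card ι : ℝ) ^ (1 / q) := by
  rw [one_div, Real.le_rpow_inv_iff_of_pos (by positivity) (by positivity) hq]
  set σ : ι → ℝ := fun i ↦ if 0 ≤ B j i then 1 else -1 with hσdef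
  have hσ (i : ι) : |σ i| = 1 := by
    simp only [hσdef]
    split_ifs <;> simp
  have hmul : B.mulVec σ j = ∑ i, |B j i| := by
    refine Finset.sum_congr rfl fun i _ ↦ ?_
    simp only [hσdef]
    split_ifs with h
    · rw [mul_one, abs_of_nonneg h]
    · rw [mul_neg_one, abs_of_neg (not_le.1 h)]
  calc (∑ i, |B j i|) ^ q = |B.mulVec σ j| ^ q := by
        rw [hmul, abs_of_nonneg (Finset.sum_nonneg fun i _ ↦ abs_nonneg _)]
    _ ≤ ∑ j, |B.mulVec σ j| ^ q := Finset.single_le_sum (f := fun j ↦ |B.mulVec σ j| ^ q)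
        (fun j _ ↦ by positivity) (Finset.mem_univ j)
    _ ≤ ∑ i, |σ i| ^ q := hB σ
    _ = Fintype.card ι := by simp [hσ]

theorem sum_rowSum_rpow_le (hB : IsLpContraction q B) (hq : 1 ≤ q) :
    ∑ j, (∑ i, |B j i|) ^ q ≤ (Fintype.card ι : ℝ) ^ q := by
  calc ∑ j, (∑ i, |B j i|) ^ q
      ≤ ∑ j, (Fintype.card ι : ℝ) ^ (q - 1) * ∑ i, |B j i| ^ q :=
        Finset.sum_le_sum fun j _ ↦ Real.rpow_sum_le_const_mul_sum_rpow Finset.univ (B j) hq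
    _ = (Fintype.card ι : ℝ) ^ (q - 1) * ∑ i, ∑ j, |B j i| ^ q := by
        rw [← Finset.mul_sum, Finset.sum_comm]
    _ ≤ (Fintype.card ι : ℝ) ^ (q - 1) * ∑ _i : ι, 1 := by
        gcongr with i
        exact hB.sum_abs_apply_rpow_le_one (by linarith) i
    _ = (Fintype.card ι : ℝ) ^ q := by
        rw [Finset.sum_const, Finset.card_univ, nsmul_eq_mul, mul_one,
          ← Real.rpow_add_one' (by positivity) (by linarith), sub_add_cancel]

/-- The transpose of `B` maps `ℓ_{q'}` to `ℓ_2` with norm at most `N ^ (1 / q - 1 / 2)`. The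
`ℓ_{q'}`-norm is expressed through a majorant `t` of `|a| ^ q'` so as to cover `q = 1`, where
`q' = ∞`. -/
theorem norm_vecMul_le (hB : IsLpContraction q B) (hq : 1 ≤ q) (hq2 : q ≤ 2) {a t : κ → ℝ}
    (ht : ∀ j, 0 ≤ t j) (hat : ∀ j, |a j| ≤ t j ^ (1 - 1 / q)) :
    ‖WithLp.toLp 2 (B.vecMul a)‖ ≤
      (∑ j, t j) ^ (1 - 1 / q) * (Fintype.card ι : ℝ) ^ (1 / q - 1 / 2) := by
  have hq0 : 0 < q := by linarith
  have hq1 : 1 / q ≤ 1 := (div_le_one hq0).2 hq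
  have htsum : 0 ≤ ∑ j, t j := Finset.sum_nonneg fun j _ ↦ ht j
  set z := B.vecMul a
  have hlq : (∑ i, |z i| ^ q) ^ (1 / q) ≤
      (Fintype.card ι : ℝ) ^ (1 / q - 1 / 2) * ‖WithLp.toLp 2 z‖ := by
    have h := Real.rpow_le_rpow (by positivity)
      (sum_abs_rpow_le_card_rpow_mul_norm_rpow hq0.le hq2 z) (by positivity : 0 ≤ 1 / q)
    rwa [Real.mul_rpow (by positivity) (by positivity), ← Real.rpow_mul (by positivity),
      ← Real.rpow_mul (by positivity), mul_one_div_cancel hq0.ne', Real.rpow_one,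
      show (1 - q / 2) * (1 / q) = 1 / q - 1 / 2 by field_simp] at h
  have hsq : ‖WithLp.toLp 2 z‖ ^ 2 ≤
      (∑ j, t j) ^ (1 - 1 / q) * (Fintype.card ι : ℝ) ^ (1 / q - 1 / 2) * ‖WithLp.toLp 2 z‖ := by
    calc ‖WithLp.toLp 2 z‖ ^ 2 = a ⬝ᵥ B.mulVec z := by
          rw [Matrix.dotProduct_mulVec, EuclideanSpace.real_norm_sq_eq]
          exact Finset.sum_congr rfl fun i _ ↦ sq (z i)
      _ ≤ ∑ j, t j ^ (1 - 1 / q) * (|B.mulVec z j| ^ q) ^ (1 / q) := by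
          refine Finset.sum_le_sum fun j _ ↦ (le_abs_self _).trans ?_
          rw [abs_mul, one_div, Real.rpow_rpow_inv (abs_nonneg _) hq0.ne', ← one_div]
          gcongr
          exact hat j
      _ ≤ (∑ j, t j) ^ (1 - 1 / q) * (∑ j, |B.mulVec z j| ^ q) ^ (1 / q) :=
          sum_rpow_mul_rpow_le _ ht (fun j ↦ by positivity) (by linarith) (by positivity) (by ring)
      _ ≤ (∑ j, t j) ^ (1 - 1 / q) * (∑ i, |z i| ^ q) ^ (1 / q) := by
          gcongr
          exact hB z
      _ ≤ _ := by
          rw [mul_assoc]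
          gcongr
  rcases (norm_nonneg (WithLp.toLp 2 z)).eq_or_lt with h0 | h0
  · rw [← h0]
    positivity
  · rw [sq] at hsq
    exact le_of_mul_le_mul_right hsq h0

theorem sum_rpow_mul_norm_sq_le (hB : IsLpContraction q B) (hq : 1 ≤ q) (hq2 : q ≤ 2) {t : κ → ℝ}
    (ht : ∀ j, 0 ≤ t j) :
    ∑ j, (t j ^ (1 - 1 / q) * ‖WithLp.toLp 2 (B j)‖) ^ 2 ≤
      ((∑ j, t j) ^ (1 - 1 / q) * (Fintype.card ι : ℝ) ^ (1 / q - 1 / 2)) ^ 2 := by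
  obtain ⟨ε, hε, hle⟩ := exists_signs_sum_norm_sq_le
    (fun j ↦ t j ^ (1 - 1 / q) • WithLp.toLp 2 (B j)) Finset.univ
  have hnorm (j : κ) : ‖t j ^ (1 - 1 / q) • WithLp.toLp 2 (B j)‖ =
      t j ^ (1 - 1 / q) * ‖WithLp.toLp 2 (B j)‖ := by
    rw [norm_smul, Real.norm_of_nonneg (Real.rpow_nonneg (ht j) _)]
  have hsum : ∑ j, ε j • t j ^ (1 - 1 / q) • WithLp.toLp 2 (B j) =
      WithLp.toLp 2 (B.vecMul fun j ↦ ε j * t j ^ (1 - 1 / q)) := by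
    simp [Matrix.vecMul_eq_sum, mul_smul]
  simp only [hnorm, hsum] at hle
  refine hle.trans (pow_le_pow_left₀ (norm_nonneg _) (hB.norm_vecMul_le hq hq2 ht fun j ↦ ?_) 2)
  rw [abs_mul, hε, one_mul, abs_of_nonneg (Real.rpow_nonneg (ht j) _)]

theorem sum_norm_row_rpow_le (hB : IsLpContraction q B) (hq : 1 ≤ q) (hq2 : q < 2) {s : ℝ}
    (hs : 1 / s = 1 / q - 1 / 2) :
    ∑ j, ‖WithLp.toLp 2 (B j)‖ ^ s ≤ Fintype.card ι := by
  have hexp : 0 < 1 / q - 1 / 2 := sub_pos.2 (one_div_lt_one_div_of_lt (by linarith) hq2)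
  have hs0 : 0 < s := one_div_pos.1 (hs ▸ hexp)
  set S := ∑ j, ‖WithLp.toLp 2 (B j)‖ ^ s
  have hS0 : 0 ≤ S := by positivity
  -- With `t j = ‖B j‖ ^ s` the weighted inequality bounds `S` by a smaller power of `S` itself.
  have hterm (j : κ) : ‖WithLp.toLp 2 (B j)‖ ^ s ≤
      ((‖WithLp.toLp 2 (B j)‖ ^ s) ^ (1 - 1 / q) * ‖WithLp.toLp 2 (B j)‖) ^ 2 := by
    rcases (norm_nonneg (WithLp.toLp 2 (B j))).eq_or_lt with h | h
    · rw [← h, Real.zero_rpow hs0.ne']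
      positivity
    · rw [← Real.rpow_mul h.le, ← Real.rpow_add_one h.ne', ← Real.rpow_mul_natCast h.le]
      refine le_of_eq (congrArg _ ?_)
      have : s * (1 / q - 1 / 2) = 1 := by rw [← hs, mul_one_div_cancel hs0.ne']
      push_cast
      linarith
  have hmain : S ≤ (S ^ (1 - 1 / q) * (Fintype.card ι : ℝ) ^ (1 / q - 1 / 2)) ^ 2 :=
    (Finset.sum_le_sum fun j _ ↦ hterm j).trans
      (hB.sum_rpow_mul_norm_sq_le hq hq2.le fun j ↦ by positivity)
  rcases hS0.eq_or_lt with h0 | hpos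
  · rw [← h0]
    positivity
  have hsqrt : S ^ (1 - 1 / q) * S ^ (1 / q - 1 / 2) ≤
      S ^ (1 - 1 / q) * (Fintype.card ι : ℝ) ^ (1 / q - 1 / 2) := by
    rw [← Real.rpow_add hpos, show 1 - 1 / q + (1 / q - 1 / 2) = 1 / 2 by ring,
      ← Real.sqrt_eq_rpow]
    exact Real.sqrt_le_iff.2 ⟨by positivity, hmain⟩
  exact (Real.rpow_le_rpow_iff hS0 (by positivity) hexp).1
    (le_of_mul_le_mul_left hsqrt (by positivity))

theorem sum_rowSum_rpow_le_of_lt_two (hB : IsLpContraction q B) (hq : 1 ≤ q) (hq2 : q < 2) {s : ℝ}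
    (hs : 1 / s = 1 / q - 1 / 2) :
    ∑ j, (∑ i, |B j i|) ^ s ≤ (Fintype.card ι : ℝ) ^ (s / q) := by
  have hq0 : 0 < q := by linarith
  have hs0 : 0 < s :=
    one_div_pos.1 (hs ▸ sub_pos.2 (one_div_lt_one_div_of_lt hq0 hq2))
  have hrow (j : κ) : (∑ i, |B j i|) ^ s ≤
      (Fintype.card ι : ℝ) ^ (s / 2) * ‖WithLp.toLp 2 (B j)‖ ^ s := by
    have h := sum_abs_rpow_le_card_rpow_mul_norm_rpow zero_le_one one_le_two (B j)
    simp only [Real.rpow_one] at h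
    refine (Real.rpow_le_rpow (by positivity) h hs0.le).trans_eq ?_
    rw [Real.mul_rpow (by positivity) (norm_nonneg _), ← Real.rpow_mul (by positivity)]
    congr 2
    ring
  calc ∑ j, (∑ i, |B j i|) ^ s
      ≤ (Fintype.card ι : ℝ) ^ (s / 2) * ∑ j, ‖WithLp.toLp 2 (B j)‖ ^ s := by
        rw [Finset.mul_sum]
        exact Finset.sum_le_sum fun j _ ↦ hrow j
    _ ≤ (Fintype.card ι : ℝ) ^ (s / 2) * Fintype.card ι := by
        gcongr
        exact hB.sum_norm_row_rpow_le hq hq2 hs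
    _ = (Fintype.card ι : ℝ) ^ (s / q) := by
        rw [← Real.rpow_add_one' (by positivity) (by positivity)]
        congr 1
        have : s * (1 / q - 1 / 2) = 1 := by rw [← hs, mul_one_div_cancel hs0.ne']
        linear_combination -this

theorem rowSum_lp_le_of_lt_two (hB : IsLpContraction q B) (hq : 1 ≤ q) (hq2 : q < 2) {p : ℝ}
    (hqp : q ≤ p) (h : 1 / q - 1 / p < 1 / 2) :
    (∑ j, (∑ i, |B j i|) ^ p) ^ (1 / p) ≤
      (Fintype.card ι : ℝ) ^ (rowSumExponent q p + 1 / p) := by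
  have hq0 : 0 < q := by linarith
  have hp0 : 0 < p := by linarith
  obtain ⟨s, hs⟩ : ∃ s : ℝ, 1 / s = 1 / q - 1 / 2 := ⟨(1 / q - 1 / 2)⁻¹, by simp⟩
  have hs0 : 0 < s := one_div_pos.1 (hs ▸ sub_pos.2 (one_div_lt_one_div_of_lt hq0 hq2))
  set θ := 2 * (1 / q - 1 / p)
  have hθ0 : 0 ≤ θ := mul_nonneg two_pos.le (sub_nonneg.2 (one_div_le_one_div_of_le hq0 hqp))
  have hθ1 : 0 ≤ 1 - θ := by simp only [θ]; linarith
  set u := p * (1 - θ) / q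
  set v := p * θ / s
  have hu : 0 ≤ u := by positivity
  have hv : 0 ≤ v := by positivity
  have hqu : q * u = p * (1 - θ) := mul_div_cancel₀ _ hq0.ne'
  have hsv : s * v = p * θ := mul_div_cancel₀ _ hs0.ne'
  have huv : u + v = 1 := by
    simp only [u, v, θ]
    rw [div_eq_mul_one_div _ s, hs]
    field_simp
    ring
  have hexp : q * u + s * v = p := by linear_combination hqu + hsv
  have hinterp : ∑ j, (∑ i, |B j i|) ^ p ≤ (Fintype.card ι : ℝ) ^ (q * u + s / q * v) := by
    calc ∑ j, (∑ i, |B j i|) ^ p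
        ≤ (∑ j, (∑ i, |B j i|) ^ q) ^ u * (∑ j, (∑ i, |B j i|) ^ s) ^ v := by
          rw [← hexp]
          exact sum_rpow_convex_comb_le _ (fun j ↦ Finset.sum_nonneg fun i _ ↦ abs_nonneg _)
            hq0.le hs0.le hu hv huv
      _ ≤ ((Fintype.card ι : ℝ) ^ q) ^ u * ((Fintype.card ι : ℝ) ^ (s / q)) ^ v := by
          gcongr
          · exact hB.sum_rowSum_rpow_le hq
          · exact hB.sum_rowSum_rpow_le_of_lt_two hq hq2 hs
      _ = (Fintype.card ι : ℝ) ^ (q * u + s / q * v) := by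
          rw [← Real.rpow_mul (by positivity), ← Real.rpow_mul (by positivity),
            ← Real.rpow_add_of_nonneg (by positivity) (by positivity) (by positivity)]
  refine (Real.rpow_le_rpow (by positivity) hinterp (by positivity)).trans_eq ?_
  rw [← Real.rpow_mul (by positivity), hqu, div_mul_eq_mul_div, hsv, rowSumExponent, if_pos hq2]
  congr 1
  simp only [θ]
  field_simp
  ring

theorem rowSum_lp_le (hB : IsLpContraction q B) (hq : 1 ≤ q) {p : ℝ} (hqp : q ≤ p)
    (h : 1 / q - 1 / p < 1 / 2) :
    (∑ j, (∑ i, |B j i|) ^ p) ^ (1 / p) ≤ (Fintype.card ι : ℝ) ^ rowSumExponent q p *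
      ((Fintype.card κ : ℝ) ^ (1 / p) + (Fintype.card ι : ℝ) ^ (1 / p)) := by
  have hq0 : 0 < q := by linarith
  have hp0 : 0 < p := by linarith
  rcases lt_or_ge q 2 with hq2 | hq2
  · refine (hB.rowSum_lp_le_of_lt_two hq hq2 hqp h).trans ?_
    rw [Real.rpow_add_of_nonneg (by positivity) (rowSumExponent_nonneg hq hqp h) (by positivity)]
    gcongr
    exact le_add_of_nonneg_left (by positivity)
  · have hsum : ∑ j, (∑ i, |B j i|) ^ p ≤
        Fintype.card κ * ((Fintype.card ι : ℝ) ^ (1 / q)) ^ p := by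
      rw [← nsmul_eq_mul, ← Finset.card_univ]
      refine Finset.sum_le_card_nsmul _ _ _ fun j _ ↦ ?_
      gcongr
      exact hB.rowSum_le hq0 j
    refine (Real.rpow_le_rpow (by positivity) hsum (by positivity)).trans ?_
    rw [Real.mul_rpow (by positivity) (by positivity), one_div p,
      Real.rpow_rpow_inv (by positivity) hp0.ne', mul_comm, rowSumExponent, if_neg hq2.not_gt]
    gcongr
    exact le_add_of_nonneg_right (by positivity)

theorem lp_sum_le_of_le_one_add_rowSum (hB : IsLpContraction q B) (hq : 1 ≤ q) {p : ℝ}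
    (hqp : q ≤ p) (h : 1 / q - 1 / p < 1 / 2) {μ : ℝ} (hμ : 0 ≤ μ) {y : κ → ℝ}
    (hy0 : ∀ j, 0 ≤ y j) (hy : ∀ j, y j ≤ 1 + μ * ∑ i, |B j i|) :
    (∑ j, y j ^ p) ^ (1 / p) ≤ (Fintype.card κ : ℝ) ^ (1 / p) +
      μ * (Fintype.card ι : ℝ) ^ rowSumExponent q p *
        ((Fintype.card κ : ℝ) ^ (1 / p) + (Fintype.card ι : ℝ) ^ (1 / p)) := by
  have hp : 1 ≤ p := hq.trans hqp
  have hp0 : 0 < p := by linarith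
  have hw (j : κ) : 0 ≤ ∑ i, |B j i| := Finset.sum_nonneg fun i _ ↦ abs_nonneg _
  calc (∑ j, y j ^ p) ^ (1 / p)
      ≤ (∑ j, (1 + μ * ∑ i, |B j i|) ^ p) ^ (1 / p) := by
        gcongr with j
        · exact Finset.sum_nonneg fun j _ ↦ Real.rpow_nonneg (hy0 j) p
        · exact hy0 j
        · exact hy j
    _ ≤ (∑ _j : κ, (1 : ℝ) ^ p) ^ (1 / p) + (∑ j, (μ * ∑ i, |B j i|) ^ p) ^ (1 / p) :=
        Real.Lp_add_le_of_nonneg Finset.univ hp (fun _ _ ↦ zero_le_one)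
          fun j _ ↦ mul_nonneg hμ (hw j)
    _ = (Fintype.card κ : ℝ) ^ (1 / p) + μ * (∑ j, (∑ i, |B j i|) ^ p) ^ (1 / p) := by
        simp only [Real.mul_rpow hμ (hw _), ← Finset.mul_sum]
        rw [Real.mul_rpow (by positivity) (by positivity), one_div p,
          Real.rpow_rpow_inv hμ hp0.ne']
        simp
    _ ≤ _ := by
        rw [mul_assoc μ]
        gcongr
        exact hB.rowSum_lp_le hq hqp h

end IsLpContraction

/-! ### Incoherent matrices of low rank -/

/-- The matrix `G` has unit diagonal and off-diagonal entries of absolute value at most `μ`, as the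
Gram matrix of a family of unit vectors of mutual coherence `μ` has. -/
structure IsIncoherent {ι : Type*} (μ : ℝ) (G : Matrix ι ι ℝ) : Prop where
  apply_self (i : ι) : G i i = 1
  abs_apply_le {i j : ι} (hij : i ≠ j) : |G i j| ≤ μ

theorem isIncoherent_one {ι : Type*} [DecidableEq ι] : IsIncoherent 0 (1 : Matrix ι ι ℝ) where
  apply_self := Matrix.one_apply_eq
  abs_apply_le hij := by rw [Matrix.one_apply_ne hij, abs_zero]

namespace IsIncoherent

variable {ι κ : Type*} {μ : ℝ} {G : Matrix ι ι ℝ}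

theorem submatrix (hG : IsIncoherent μ G) {f : κ → ι} (hf : f.Injective) :
    IsIncoherent μ (G.submatrix f f) where
  apply_self i := hG.apply_self (f i)
  abs_apply_le hij := hG.abs_apply_le (hf.ne hij)

theorem abs_mulVec_le [Fintype ι] (hG : IsIncoherent μ G) (hμ : 0 ≤ μ) (z : ι → ℝ) (i : ι) :
    |G.mulVec z i| ≤ |z i| + μ * ∑ l, |z l| := by
  classical
  have hsplit : G.mulVec z i = z i + ∑ l ∈ Finset.univ.erase i, G i l * z l := by
    rw [Matrix.mulVec, dotProduct, ← Finset.add_sum_erase _ _ (Finset.mem_univ i),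
      hG.apply_self, one_mul]
  rw [hsplit]
  refine (abs_add_le _ _).trans (add_le_add_right ?_ _)
  calc |∑ l ∈ Finset.univ.erase i, G i l * z l|
      ≤ ∑ l ∈ Finset.univ.erase i, |G i l * z l| := Finset.abs_sum_le_sum_abs _ _
    _ ≤ ∑ l ∈ Finset.univ.erase i, μ * |z l| := Finset.sum_le_sum fun l hl ↦ by
        rw [abs_mul]
        gcongr
        exact hG.abs_apply_le (Finset.ne_of_mem_erase hl).symm
    _ ≤ ∑ l, μ * |z l| := Finset.sum_le_sum_of_subset_of_nonneg (Finset.erase_subset _ _)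
        fun l _ _ ↦ by positivity
    _ = μ * ∑ l, |z l| := (Finset.mul_sum _ _ _).symm

end IsIncoherent

/-- The proportion of points at which the functions `f i` and `f j` agree. It is the Gram matrix of
the normalised indicator functions of the graphs of the `f i`. -/
def agreementMatrix {ι α β : Type*} [Fintype α] [DecidableEq β] (f : ι → α → β) : Matrix ι ι ℝ :=
  Matrix.of fun i j ↦ (Finset.card {a | f i a = f j a} : ℝ) / Fintype.card α

theorem rank_agreementMatrix_le {ι α β : Type*} [Fintype ι] [Fintype α] [Fintype β] [DecidableEq β]
    (f : ι → α → β) : (agreementMatrix f).rank ≤ Fintype.card α * Fintype.card β := by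
  set V : Matrix ι (α × β) ℝ := Matrix.of fun i a ↦ if f i a.1 = a.2 then 1 else 0
  have hfactor : agreementMatrix f = V * ((Fintype.card α : ℝ)⁻¹ • V.transpose) := by
    ext i j
    simp [agreementMatrix, V, Matrix.mul_apply, Fintype.sum_prod_type, div_eq_mul_inv,
      Finset.natCast_card_filter, Finset.sum_mul, -Finset.sum_boole, eq_comm]
  rw [hfactor, ← Fintype.card_prod]
  exact (Matrix.rank_mul_le_left _ _).trans (Matrix.rank_le_card_width V)

theorem card_eval_eq_le {F : Type*} [Field F] [Fintype F] [DecidableEq F] {d : ℕ}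
    {P Q : Polynomial F} (hP : P ∈ Polynomial.degreeLT F (d + 1))
    (hQ : Q ∈ Polynomial.degreeLT F (d + 1)) (hPQ : P ≠ Q) :
    Finset.card {a | P.eval a = Q.eval a} ≤ d := by
  rw [Polynomial.mem_degreeLT] at hP hQ
  by_contra! hlt
  have hcard : ((d + 1 : ℕ) : WithBot ℕ) ≤ (Finset.card {a | P.eval a = Q.eval a} : ℕ) := by
    exact_mod_cast hlt
  exact hPQ (Polynomial.eq_of_degrees_lt_of_eval_finset_eq _ (hP.trans_le hcard)
    (hQ.trans_le hcard) fun a ha ↦ (Finset.mem_filter.1 ha).2)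

theorem exists_isIncoherent_rank_le (F : Type*) [Field F] [Fintype F] {N d : ℕ}
    (hN : N ≤ Fintype.card F ^ (d + 1)) :
    ∃ G : Matrix (Fin N) (Fin N) ℝ,
      G.rank ≤ Fintype.card F ^ 2 ∧ IsIncoherent (d / Fintype.card F) G := by
  classical
  obtain ⟨φ⟩ := Function.Embedding.nonempty_of_card_le
    (show Fintype.card (Fin N) ≤ Fintype.card (Fin (d + 1) → F) by simpa using hN)
  set P : Fin N → Polynomial.degreeLT F (d + 1) :=
    fun i ↦ (Polynomial.degreeLTEquiv F (d + 1)).symm (φ i)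
  have hP : P.Injective := (Polynomial.degreeLTEquiv F (d + 1)).symm.injective.comp φ.injective
  refine ⟨agreementMatrix fun i a ↦ (P i : Polynomial F).eval a, ?_, fun i ↦ ?_, fun {i j} hij ↦ ?_⟩
  · rw [sq]
    exact rank_agreementMatrix_le _
  · simp [agreementMatrix]
  · rw [agreementMatrix, Matrix.of_apply, abs_of_nonneg (by positivity)]
    gcongr
    exact card_eval_eq_le (P i).2 (P j).2 (Subtype.coe_injective.ne (hP.ne hij))

theorem exists_prime_sq_le_and_le_four_mul_sq {n : ℕ} (hn : 4 ≤ n) :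
    ∃ ℓ : ℕ, ℓ.Prime ∧ ℓ ^ 2 ≤ n ∧ n ≤ 4 * ℓ ^ 2 := by
  have hsqrt : 2 ≤ n.sqrt := Nat.le_sqrt.2 hn
  obtain ⟨ℓ, hℓ, hlt, hle⟩ := Nat.exists_prime_lt_and_le_two_mul (n.sqrt / 2) (by omega)
  refine ⟨ℓ, hℓ, (Nat.pow_le_pow_left (by omega) 2).trans n.sqrt_le', ?_⟩
  calc n ≤ (n.sqrt + 1) ^ 2 := (Nat.lt_succ_sqrt' n).le
    _ ≤ (2 * ℓ) ^ 2 := Nat.pow_le_pow_left (by omega) 2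
    _ = 4 * ℓ ^ 2 := by ring

theorem exists_isIncoherent_rank_le_of_rpow_le {n N : ℕ} (hn : 4 ≤ n)
    (hN : 8 * (N : ℝ) ≤ (n : ℝ) ^ (3 / 2 : ℝ)) :
    ∃ G : Matrix (Fin N) (Fin N) ℝ,
      G.rank ≤ n ∧ IsIncoherent (4 * (n : ℝ) ^ (-(1 / 2) : ℝ)) G := by
  obtain ⟨ℓ, hℓ, hle, hge⟩ := exists_prime_sq_le_and_le_four_mul_sq hn
  have : Fact ℓ.Prime := ⟨hℓ⟩
  have hℓ0 : (0 : ℝ) < ℓ := by exact_mod_cast hℓ.pos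
  have hn0 : (0 : ℝ) < n := by positivity
  have hsqrt : (n : ℝ) ^ (1 / 2 : ℝ) ≤ 2 * ℓ := by
    rw [← Real.sqrt_eq_rpow, Real.sqrt_le_left (by positivity), mul_pow]
    norm_num
    exact_mod_cast hge
  have hcube : (n : ℝ) ^ (3 / 2 : ℝ) ≤ 8 * (ℓ : ℝ) ^ 3 := by
    calc (n : ℝ) ^ (3 / 2 : ℝ) = ((n : ℝ) ^ (1 / 2 : ℝ)) ^ 3 := by
          rw [← Real.rpow_mul_natCast hn0.le]
          norm_num
      _ ≤ (2 * (ℓ : ℝ)) ^ 3 := by gcongr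
      _ = 8 * (ℓ : ℝ) ^ 3 := by ring
  have hNℓ : N ≤ ℓ ^ 3 := by exact_mod_cast show (N : ℝ) ≤ (ℓ : ℝ) ^ 3 by linarith
  obtain ⟨G, hrank, hG⟩ := exists_isIncoherent_rank_le (ZMod ℓ) (N := N) (d := 2)
    (by rwa [ZMod.card])
  rw [ZMod.card] at hrank hG
  refine ⟨G, hrank.trans hle, hG.apply_self, fun hij ↦ (hG.abs_apply_le hij).trans ?_⟩
  rw [Real.rpow_neg hn0.le, ← div_eq_mul_inv, Nat.cast_two, div_le_div_iff₀ hℓ0 (by positivity)]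
  linarith

theorem eventually_exists_isIncoherent {α β : ℝ} (hα0 : 0 ≤ α) (hα : α < 3 / 2) (hβ0 : 0 ≤ β)
    (hβ1 : β ≤ 1) (hαβ : α * β < 1 / 2) {ε : ℝ} (hε : 0 < ε) :
    ∀ᶠ n : ℕ in Filter.atTop, ∃ N : ℕ, (n : ℝ) ^ α ≤ N ∧ ∃ G : Matrix (Fin N) (Fin N) ℝ,
      G.rank ≤ n ∧ ∃ μ : ℝ, 0 ≤ μ ∧ IsIncoherent μ G ∧ μ * (N : ℝ) ^ β ≤ ε := by
  have hsmall : ∀ᶠ n : ℕ in Filter.atTop, (n : ℝ) ^ (-(1 / 2 - α * β)) < ε / 8 :=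
    ((tendsto_rpow_neg_atTop (by linarith)).comp tendsto_natCast_atTop_atTop).eventually
      (gt_mem_nhds (by positivity))
  have hlarge : ∀ᶠ n : ℕ in Filter.atTop, 16 ≤ (n : ℝ) ^ (3 / 2 - α) :=
    ((tendsto_rpow_atTop (by linarith)).comp tendsto_natCast_atTop_atTop).eventually
      (Filter.eventually_ge_atTop 16)
  filter_upwards [hsmall, hlarge, Filter.eventually_ge_atTop 4] with n hsmall hlarge hn
  have hn0 : (0 : ℝ) < n := by positivity
  have hn1 : (1 : ℝ) ≤ n := by exact_mod_cast (by omega : 1 ≤ n)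
  set N := ⌈(n : ℝ) ^ α⌉₊
  have hN : (N : ℝ) ≤ 2 * (n : ℝ) ^ α := by
    have := Nat.ceil_lt_add_one (Real.rpow_nonneg hn0.le α)
    have := Real.one_le_rpow hn1 hα0
    linarith
  have hN8 : 8 * (N : ℝ) ≤ (n : ℝ) ^ (3 / 2 : ℝ) := by
    calc 8 * (N : ℝ) ≤ 16 * (n : ℝ) ^ α := by linarith
      _ ≤ (n : ℝ) ^ (3 / 2 - α) * (n : ℝ) ^ α := by gcongr
      _ = (n : ℝ) ^ (3 / 2 : ℝ) := by rw [← Real.rpow_add hn0, sub_add_cancel]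
  obtain ⟨G, hrank, hG⟩ := exists_isIncoherent_rank_le_of_rpow_le hn hN8
  refine ⟨N, Nat.le_ceil _, G, hrank, _, by positivity, hG, ?_⟩
  calc 4 * (n : ℝ) ^ (-(1 / 2) : ℝ) * (N : ℝ) ^ β
      ≤ 4 * (n : ℝ) ^ (-(1 / 2) : ℝ) * (2 * (n : ℝ) ^ α) ^ β := by gcongr
    _ = 4 * 2 ^ β * (n : ℝ) ^ (-(1 / 2 - α * β)) := by
        rw [Real.mul_rpow zero_le_two (by positivity), ← Real.rpow_mul hn0.le,
          show -(1 / 2 - α * β) = -(1 / 2) + α * β by ring, Real.rpow_add hn0]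
        ring
    _ ≤ 4 * 2 ^ (1 : ℝ) * (ε / 8) := by gcongr; exact one_le_two
    _ = ε := by rw [Real.rpow_one]; ring

/-! ### Operators on the dual of `ℓ_q` -/

theorem inclusionInDoubleDual_surjective {E : Type*} [NormedAddCommGroup E] [NormedSpace ℝ E]
    [FiniteDimensional ℝ E] : Function.Surjective (NormedSpace.inclusionInDoubleDual ℝ E) := by
  have hdual (V : Type _) [NormedAddCommGroup V] [NormedSpace ℝ V] [FiniteDimensional ℝ V] :
      Module.finrank ℝ (StrongDual ℝ V) = Module.finrank ℝ V :=
    (LinearMap.toContinuousLinearMap (𝕜 := ℝ) (E := V) (F' := ℝ)).symm.finrank_eq.trans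
      Subspace.dual_finrank_eq
  exact (LinearMap.injective_iff_surjective_of_finrank_eq_finrank
    (f := (NormedSpace.inclusionInDoubleDual ℝ E).toLinearMap)
    ((hdual (StrongDual ℝ E)).trans (hdual E)).symm).1
    (NormedSpace.inclusionInDoubleDualLi (E := E) ℝ).injective

theorem eSum_ofReal {p : ℝ≥0∞} (hp : p ≠ ∞) {ι : Type*} [Fintype ι] {y : ι → ℝ}
    (hy : ∀ j, 0 ≤ y j) :
    eSum p (fun j ↦ ENNReal.ofReal (y j)) =
      ENNReal.ofReal ((∑ j, y j ^ p.toReal) ^ (1 / p.toReal)) := by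
  rw [eSum, if_neg hp, ← ENNReal.ofReal_rpow_of_nonneg
    (Finset.sum_nonneg fun j _ ↦ Real.rpow_nonneg (hy j) _) (by positivity),
    ENNReal.ofReal_sum_of_nonneg fun j _ ↦ Real.rpow_nonneg (hy j) _]
  simp only [ENNReal.ofReal_rpow_of_nonneg (hy _) ENNReal.toReal_nonneg]

theorem weakLq_le_one_iff {q : ℝ≥0∞} (hq : 0 < q.toReal) {X : Type*} [NormedAddCommGroup X]
    [NormedSpace ℝ X] {n : ℕ} {x : Fin n → X} :
    weakLq q x ≤ 1 ↔
      ∀ f : StrongDual ℝ X, ∑ j, |f (x j)| ^ q.toReal ≤ ‖f‖ ^ q.toReal := by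
  have hunit : weakLq q x ≤ 1 ↔
      ∀ f : StrongDual ℝ X, ‖f‖ ≤ 1 → ∑ j, |f (x j)| ^ q.toReal ≤ 1 := by
    rw [weakLq, iSup_le_iff, Subtype.forall]
    refine forall₂_congr fun f _ ↦ ?_
    rw [eSum_ofReal (ENNReal.toReal_pos_iff.1 hq).2.ne fun j ↦ abs_nonneg (f (x j)),
      ENNReal.ofReal_le_one, one_div, Real.rpow_inv_le_iff_of_pos (by positivity) zero_le_one hq,
      Real.one_rpow]
  refine hunit.trans ⟨fun h f ↦ ?_, fun h f hf ↦ (h f).trans ?_⟩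
  · rcases (norm_nonneg f).eq_or_lt with h0 | h0
    · simp [norm_eq_zero.1 h0.symm, Real.zero_rpow hq.ne']
    · have hnormalized := h (‖f‖⁻¹ • f)
        (by rw [norm_smul, norm_inv, norm_norm, inv_mul_cancel₀ h0.ne'])
      simpa only [smul_apply, smul_eq_mul, abs_mul, abs_inv, abs_norm,
        Real.mul_rpow (inv_nonneg.2 h0.le) (abs_nonneg _), ← Finset.mul_sum,
        Real.inv_rpow h0.le, inv_mul_le_one₀ (Real.rpow_pos_of_pos h0 _)] using hnormalized
  · exact Real.rpow_le_one (norm_nonneg f) hf hq.le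

theorem sum_abs_rpow_eq_norm_rpow {q : ℝ≥0∞} (hq : 0 < q.toReal) {ι : Type*} [Fintype ι]
    (z : PiLp q fun _ : ι ↦ ℝ) : ∑ i, |z i| ^ q.toReal = ‖z‖ ^ q.toReal := by
  rw [PiLp.norm_eq_sum hq, one_div, Real.rpow_inv_rpow (by positivity) hq.ne']
  simp only [Real.norm_eq_abs]

section DualOfLq

variable {q : ℝ≥0∞} {ι : Type*} [Fintype ι]

/-- The coordinates of an element of the dual of `ℓ_q^ι`. -/
def dualCoord (x : StrongDual ℝ (PiLp q fun _ : ι ↦ ℝ)) (i : ι) : ℝ :=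
  x (PiLp.basisFun q ℝ ι i)

theorem dualCoord_dotProduct (x : StrongDual ℝ (PiLp q fun _ : ι ↦ ℝ)) (z : ι → ℝ) :
    dualCoord x ⬝ᵥ z = x (WithLp.toLp q z) := by
  conv_rhs => rw [← (PiLp.basisFun q ℝ ι).sum_repr (WithLp.toLp q z)]
  simp [dualCoord, dotProduct, mul_comm, -PiLp.basisFun_apply]

variable [Fact (1 ≤ q)]

theorem isLpContraction_of_weakLq_le_one (hq : 0 < q.toReal) {k : ℕ}
    {x : Fin k → StrongDual ℝ (PiLp q fun _ : ι ↦ ℝ)} (hx : weakLq q x ≤ 1) :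
    IsLpContraction q.toReal (Matrix.of fun j ↦ dualCoord (x j)) := fun z ↦ by
  calc ∑ j, |(Matrix.of fun j ↦ dualCoord (x j)).mulVec z j| ^ q.toReal
      = ∑ j, |NormedSpace.inclusionInDoubleDual ℝ _ (WithLp.toLp q z) (x j)| ^ q.toReal :=
        Finset.sum_congr rfl fun j _ ↦ by
          rw [NormedSpace.dual_def, ← dualCoord_dotProduct]
          rfl
    _ ≤ ‖NormedSpace.inclusionInDoubleDual ℝ _ (WithLp.toLp q z)‖ ^ q.toReal :=
        (weakLq_le_one_iff hq).1 hx _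
    _ ≤ ‖WithLp.toLp q z‖ ^ q.toReal := by
        gcongr
        exact NormedSpace.double_dual_bound ℝ _ _
    _ = ∑ i, |z i| ^ q.toReal := (sum_abs_rpow_eq_norm_rpow hq (WithLp.toLp q z)).symm

theorem weakLq_proj_le_one (hq : 0 < q.toReal) {n : ℕ} (e : Fin n ≃ ι) :
    weakLq q (fun j ↦ PiLp.proj (𝕜 := ℝ) q (fun _ : ι ↦ ℝ) (e j)) ≤ 1 := by
  refine (weakLq_le_one_iff hq).2 fun f ↦ ?_
  obtain ⟨z, rfl⟩ := inclusionInDoubleDual_surjective f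
  simp only [NormedSpace.dual_def, PiLp.proj_apply]
  rw [e.sum_comp fun i ↦ |z i| ^ q.toReal, sum_abs_rpow_eq_norm_rpow hq,
    ← (NormedSpace.inclusionInDoubleDualLi ℝ).norm_map z]
  rfl

variable {σ : Type*}

variable (q) in
/-- The operator from `(ℓ_q^ι)*` to `ℓ_∞^σ` whose components are the evaluations at the rows of
`A`, that is, multiplication by `A` in coordinates. -/
def dualMulVec (A : Matrix σ ι ℝ) : StrongDual ℝ (PiLp q fun _ : ι ↦ ℝ) →L[ℝ] σ → ℝ :=
  ContinuousLinearMap.pi fun s ↦ NormedSpace.inclusionInDoubleDual ℝ _ (WithLp.toLp q (A s))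

theorem dualMulVec_apply (A : Matrix σ ι ℝ) (x : StrongDual ℝ (PiLp q fun _ : ι ↦ ℝ)) :
    dualMulVec q A x = A.mulVec (dualCoord x) := by
  ext s
  rw [Matrix.mulVec, dotProduct_comm, dualCoord_dotProduct]
  rfl

variable [Fintype σ]

theorem rankLE_dualMulVec {A : Matrix σ ι ℝ} {n : ℕ} (hA : A.rank ≤ n) :
    RankLE (dualMulVec q A) n := by
  refine ⟨inferInstance, (Submodule.finrank_mono ?_).trans hA⟩
  rintro _ ⟨x, rfl⟩
  exact ⟨dualCoord x, (dualMulVec_apply A x).symm⟩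

theorem ofReal_card_rpow_le_piPQ_dualMulVec (hq : 0 < q.toReal) {p : ℝ≥0∞} (hp : p ≠ ∞)
    {A : Matrix σ ι ℝ} (hA : ∀ i, ∃ s, A s i = 1) :
    ENNReal.ofReal ((Fintype.card ι : ℝ) ^ (1 / p.toReal)) ≤ piPQ p q (dualMulVec q A) := by
  set e := (Fintype.equivFin ι).symm
  refine le_iSup_of_le (Fintype.card ι) (le_iSup_of_le ⟨_, weakLq_proj_le_one hq e⟩ ?_)
  rw [eSum_ofReal hp fun _ ↦ norm_nonneg _]
  have hnorm (j : Fin (Fintype.card ι)) :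
      1 ≤ ‖dualMulVec q A (PiLp.proj (𝕜 := ℝ) q (fun _ : ι ↦ ℝ) (e j))‖ := by
    obtain ⟨s, hs⟩ := hA (e j)
    refine le_trans (le_of_eq ?_) (norm_le_pi_norm _ s)
    change 1 = ‖A s (e j)‖
    rw [hs, norm_one]
  gcongr
  calc (Fintype.card ι : ℝ) = ∑ _j : Fin (Fintype.card ι), 1 := by simp
    _ ≤ _ := Finset.sum_le_sum fun j _ ↦ Real.one_le_rpow (hnorm j) ENNReal.toReal_nonneg

theorem norm_dualMulVec_submatrix_le (hq : 0 < q.toReal) {G : Matrix ι ι ℝ} {μ : ℝ} (hμ : 0 ≤ μ)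
    (hG : IsIncoherent μ G) (f : σ → ι) {k : ℕ} {x : Fin k → StrongDual ℝ (PiLp q fun _ : ι ↦ ℝ)}
    (hx : weakLq q x ≤ 1) (j : Fin k) :
    ‖dualMulVec q (G.submatrix f id) (x j)‖ ≤ 1 + μ * ∑ i, |dualCoord (x j) i| := by
  have hB := isLpContraction_of_weakLq_le_one hq hx
  refine (pi_norm_le_iff_of_nonneg (by positivity)).2 fun s ↦ ?_
  rw [dualMulVec_apply]
  exact (hG.abs_mulVec_le hμ _ (f s)).trans (add_le_add_left (hB.abs_apply_le_one hq j (f s)) _)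

theorem piN_dualMulVec_submatrix_le {p : ℝ≥0∞} (hqp : q ≤ p) (hp : p ≠ ∞)
    (h : 1 / q.toReal - 1 / p.toReal < 1 / 2) {G : Matrix ι ι ℝ} {μ : ℝ} (hμ : 0 ≤ μ)
    (hG : IsIncoherent μ G) (f : σ → ι) (k : ℕ) :
    piN p q k (dualMulVec q (G.submatrix f id)) ≤
      ENNReal.ofReal ((k : ℝ) ^ (1 / p.toReal) +
        μ * (Fintype.card ι : ℝ) ^ rowSumExponent q.toReal p.toReal *
          ((k : ℝ) ^ (1 / p.toReal) + (Fintype.card ι : ℝ) ^ (1 / p.toReal))) := by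
  have hq1 : 1 ≤ q.toReal := by
    rw [← ENNReal.toReal_one]
    exact ENNReal.toReal_mono (ne_top_of_le_ne_top hp hqp) Fact.out
  have hq0 : 0 < q.toReal := by linarith
  refine iSup_le fun ⟨x, hx⟩ ↦ ?_
  rw [eSum_ofReal hp fun _ ↦ norm_nonneg _]
  refine ENNReal.ofReal_le_ofReal ?_
  simpa only [Fintype.card_fin] using
    (isLpContraction_of_weakLq_le_one hq0 hx).lp_sum_le_of_le_one_add_rowSum hq1
      (ENNReal.toReal_mono hp hqp) h hμ (fun j ↦ norm_nonneg _)
      (norm_dualMulVec_submatrix_le hq0 hμ hG f hx)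

end DualOfLq

/-! ### Growth of the number of vectors -/

theorem le_rpow_mul_of_rpow_one_div_le {p c δ N K : ℝ} (hp : 0 < p) (hc : 0 < c) (hN : 0 ≤ N)
    (hK : 0 ≤ K) (hδ1 : δ ≤ 1) (hδc : δ ≤ 1 / (2 * c))
    (h : N ^ (1 / p) ≤ c * (K ^ (1 / p) + δ * (K ^ (1 / p) + N ^ (1 / p)))) :
    N ≤ (4 * c) ^ p * K := by
  have hcδ : c * δ ≤ 1 / 2 := by
    rw [le_div_iff₀ (by positivity)] at hδc
    linarith
  have hK' : c * (δ * K ^ (1 / p)) ≤ c * (1 * K ^ (1 / p)) := by gcongr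
  have hN' : c * δ * N ^ (1 / p) ≤ 1 / 2 * N ^ (1 / p) := by gcongr
  have hroot : N ^ (1 / p) ≤ 4 * c * K ^ (1 / p) := by linarith
  rw [one_div] at hroot
  calc N = (N ^ p⁻¹) ^ p := (Real.rpow_inv_rpow hN hp.ne').symm
    _ ≤ (4 * c * K ^ p⁻¹) ^ p := by gcongr
    _ = (4 * c) ^ p * K := by
      rw [Real.mul_rpow (by positivity) (by positivity), Real.rpow_inv_rpow hK hp.ne']

universe u v

theorem card_le_of_piPQ_le_piN {q p : ℝ≥0∞} (hq : 1 ≤ q) (hqp : q ≤ p) (hp : p ≠ ∞)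
    (h : 1 / q.toReal - 1 / p.toReal < 1 / 2) {c : ℝ≥0} (hc : 0 < c) {n k : ℕ}
    (hpi : ∀ (X : Type u) (Y : Type v) [NormedAddCommGroup X] [NormedSpace ℝ X] [CompleteSpace X]
      [NormedAddCommGroup Y] [NormedSpace ℝ Y] [CompleteSpace Y] (T : X →L[ℝ] Y), RankLE T n →
        piPQ p q T ≤ (c : ℝ≥0∞) * piN p q k T)
    {N : ℕ} {G : Matrix (Fin N) (Fin N) ℝ} {μ : ℝ} (hrank : G.rank ≤ n) (hμ : 0 ≤ μ)
    (hG : IsIncoherent μ G)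
    (hsmall : μ * (N : ℝ) ^ rowSumExponent q.toReal p.toReal ≤ min 1 (1 / (2 * c))) :
    (N : ℝ) ≤ (4 * c) ^ p.toReal * k := by
  have : Fact (1 ≤ q) := ⟨hq⟩
  have hq0 : 0 < q.toReal :=
    ENNReal.toReal_pos (zero_lt_one.trans_le hq).ne' (ne_top_of_le_ne_top hp hqp)
  set G' := G.submatrix (ULift.down : ULift.{u} (Fin N) → Fin N) ULift.down
  have hG' : IsIncoherent μ G' := hG.submatrix ULift.down_injective
  set e : ULift.{v} (Fin N) → ULift.{u} (Fin N) := fun i ↦ ⟨i.down⟩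
  have hT : RankLE (dualMulVec q (G'.submatrix e id)) n := rankLE_dualMulVec
    ((Matrix.rank_submatrix_le _ _ _).trans ((Matrix.rank_submatrix_le _ _ _).trans hrank))
  have hlower := ofReal_card_rpow_le_piPQ_dualMulVec hq0 hp (A := G'.submatrix e id)
    fun i ↦ ⟨⟨i.down⟩, hG'.apply_self i⟩
  have hupper := piN_dualMulVec_submatrix_le hqp hp h hμ hG' e k
  have hle := hlower.trans ((hpi _ _ _ hT).trans (mul_le_mul_right hupper _))
  rw [← ENNReal.ofReal_coe_nnreal, ← ENNReal.ofReal_mul c.coe_nonneg,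
    ENNReal.ofReal_le_ofReal_iff (by positivity), Fintype.card_ulift, Fintype.card_fin] at hle
  exact le_rpow_mul_of_rpow_one_div_le (hq0.trans_le (ENNReal.toReal_mono hp hqp)) hc
    (Nat.cast_nonneg N) (Nat.cast_nonneg k) (hsmall.trans (min_le_left _ _))
    (hsmall.trans (min_le_right _ _)) hle

theorem exists_forall_rpow_le_mul {α : ℝ} (hα : 0 < α) {u : ℕ → ℝ} (hu0 : 0 ≤ u 0)
    (hu : ∀ n, 1 ≤ n → 1 ≤ u n) (h : ∀ᶠ n : ℕ in Filter.atTop, (n : ℝ) ^ α ≤ u n) :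
    ∃ C : ℝ, ∀ n : ℕ, (n : ℝ) ^ α ≤ C * u n := by
  obtain ⟨m, hm⟩ := Filter.eventually_atTop.1 h
  refine ⟨1 + (m : ℝ) ^ α, fun n ↦ ?_⟩
  have hmα : 0 ≤ (m : ℝ) ^ α := by positivity
  rcases n.eq_zero_or_pos with rfl | hn
  · rw [Nat.cast_zero, Real.zero_rpow hα.ne']
    positivity
  · have hun := hu n hn
    have hmul := le_mul_of_one_le_right hmα hun
    rw [add_mul, one_mul]
    rcases le_total m n with hmn | hnm
    · linarith [hm n hmn]
    · have : (n : ℝ) ^ α ≤ (m : ℝ) ^ α := by gcongr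
      linarith

theorem one_div_toReal_sub_one_div_toReal_lt_half {q p r : ℝ≥0∞} (hp : p ≠ 0)
    (hr : 1 / q = 1 / p + 1 / r) (hr2 : 2 < r) :
    1 / q.toReal - 1 / p.toReal < 1 / 2 := by
  have hr0 : r ≠ 0 := (zero_lt_two.trans hr2).ne'
  have hrinv : r⁻¹.toReal < 1 / 2 := by
    have := ENNReal.toReal_strict_mono (by simp) (ENNReal.inv_lt_inv.2 hr2)
    simpa using this
  have htoReal := congrArg ENNReal.toReal hr
  simp only [one_div] at htoReal ⊢
  rw [ENNReal.toReal_add (by simpa) (by simpa), ENNReal.toReal_inv, ENNReal.toReal_inv] at htoReal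
  linarith

/-- for `1 ≤ q ≤ p < ∞` with `1/q = 1/p + 1/r` (`q ≤ r ≤ ∞`),
`q ≠ 2` and `2 < r ≤ ∞`, there is `α > 1` such that any sequence `k_n` for which
`π_{p,q}(T) ≤ c · π_{p,q}^{k_n}(T)` holds for all rank-`n` operators must satisfy
`n^α ≤ c̄ · k_n`. -/
theorem statement5 (q p r : ℝ≥0∞) (hq : 1 ≤ q) (hqp : q ≤ p) (hp : p < ∞)
    (hqr : q ≤ r) (hr : 1 / q = 1 / p + 1 / r) (hq2 : q ≠ 2) (hr2 : 2 < r) :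
    ∃ α : ℝ, 1 < α ∧
      ∀ (c : ℝ≥0), 0 < c → ∀ k : ℕ → ℕ,
        (∀ (X Y : Type*) [NormedAddCommGroup X] [NormedSpace ℝ X] [CompleteSpace X]
          [NormedAddCommGroup Y] [NormedSpace ℝ Y] [CompleteSpace Y]
          (n : ℕ) (T : X →L[ℝ] Y), RankLE T n →
            piPQ p q T ≤ (c : ℝ≥0∞) * piN p q (k n) T) →
        ∃ cbar : ℝ, ∀ n : ℕ, (n : ℝ) ^ α ≤ cbar * k n := by
  have hqt : q ≠ ∞ := (hqp.trans_lt hp).ne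
  have hq1 : 1 ≤ q.toReal := ENNReal.toReal_one ▸ ENNReal.toReal_mono hqt hq
  have hq2' : q.toReal ≠ 2 := fun h ↦
    hq2 (by rw [← ENNReal.ofReal_toReal hqt, h, ENNReal.ofReal_ofNat])
  have hgap := one_div_toReal_sub_one_div_toReal_lt_half
    (one_pos.trans_le (hq.trans hqp)).ne' hr hr2
  set β := rowSumExponent q.toReal p.toReal
  have hβ0 : 0 ≤ β := rowSumExponent_nonneg hq1 (ENNReal.toReal_mono hp.ne hqp) hgap
  have hβ1 : β < 1 / 2 := rowSumExponent_lt_half (by linarith) hq2' hgap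
  obtain ⟨α, hα1, hα2, hαβ⟩ : ∃ α : ℝ, 1 < α ∧ α < 3 / 2 ∧ α * β < 1 / 2 :=
    ⟨1 + (1 / 2 - β) / 2, by linarith, by linarith, by nlinarith⟩
  refine ⟨α, hα1, fun c hc k hpi ↦ ?_⟩
  have hcard {n N : ℕ} {G : Matrix (Fin N) (Fin N) ℝ} {μ : ℝ} (hrank : G.rank ≤ n) :=
    card_le_of_piPQ_le_piN (μ := μ) hq hqp hp.ne hgap hc (fun X Y ↦ hpi X Y n) hrank
  have hone (n : ℕ) (hn : 1 ≤ n) : 1 ≤ (4 * c : ℝ) ^ p.toReal * k n := by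
    simpa using hcard (Matrix.rank_one.trans_le (by simpa)) le_rfl
      (isIncoherent_one (ι := Fin 1)) (by simp)
  have hlarge : ∀ᶠ n : ℕ in Filter.atTop, (n : ℝ) ^ α ≤ (4 * c) ^ p.toReal * k n :=
    (eventually_exists_isIncoherent (by linarith) hα2 hβ0 (by linarith) hαβ (by positivity)).mono
      fun n ⟨N, hN, G, hrank, μ, hμ, hG, hsmall⟩ ↦ hN.trans (hcard hrank hμ hG hsmall)
  obtain ⟨C, hC⟩ := exists_forall_rpow_le_mul (by linarith) (by positivity) hone hlarge
  exact ⟨C * (4 * c) ^ p.toReal, fun n ↦ (hC n).trans_eq (mul_assoc _ _ _).symm⟩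

end
end
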